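/- arXiv:2209.02306 — 5 statements merged into one kernel-verified Lean document; each statement's English description precedes it below -/
import Mathlib

section
/- Let M = cQ + εD ∈ 𝔻ℍ[t] be a bounded monic motion polynomial with c ∈ ℝ[t] and Q, D ∈ ℍ[t], such that both M and Q have only constant real polynomial factors (i.e., mrpf(M) = 1 and mrpf(Q) = 1). Let g ∈ ℝ[t] be the greatest common monic real polynomial divisor of the three polynomials c, Q*·D, and D·Q*. Then M admits a factorization into monic linear motion polynomial factors if and only if c·g divides D·D* in ℝ[t]. -/
open Polynomial DualNumber TrivSqZeroExt

noncomputable section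

/-- The real quaternions. -/
abbrev Hq : Type := Quaternion ℝ

/-- The dual quaternions. -/
abbrev DHq : Type := DualNumber Hq

/-- Conjugation of a dual quaternion: `(p + ε d)* = p* + ε d*`. -/
instance : Star DHq := ⟨fun x => inl (star x.fst) + inr (star x.snd)⟩

/-- Coefficient-wise (quaternion) conjugation of a polynomial. -/
def cstar {R : Type*} [Semiring R] [Star R] (A : R[X]) : R[X] :=
  A.sum fun n a => Polynomial.C (star a) * Polynomial.X ^ n

/-- The embedding `ℝ[t] → ℍ[t]`. -/
def qPoly (f : ℝ[X]) : Hq[X] := f.map (algebraMap ℝ Hq)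

/-- The embedding `ℍ[t] → 𝔻ℍ[t]` (primal part). -/
def dhQ (P : Hq[X]) : DHq[X] := P.map (inlHom Hq Hq)

/-- The embedding `ℝ[t] → 𝔻ℍ[t]`. -/
def dPoly (f : ℝ[X]) : DHq[X] := dhQ (qPoly f)

/-- The dual quaternion polynomial `P + ε D` with primal part `P` and dual part `D`. -/
def mp (P D : Hq[X]) : DHq[X] := dhQ P + Polynomial.C ε * dhQ D

/-- The primal part of a dual quaternion polynomial. -/
def primal (A : DHq[X]) : Hq[X] := A.map (fstHom ℝ Hq Hq).toRingHom

/-- A motion polynomial: a dual quaternion polynomial whose norm polynomial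
`ν(M) = M·M*` is a nonzero real polynomial. -/
def IsMotion (M : DHq[X]) : Prop := ∃ f : ℝ[X], f ≠ 0 ∧ M * cstar M = dPoly f

/-- A real polynomial divides a quaternion polynomial. -/
def RDvdQ (f : ℝ[X]) (A : Hq[X]) : Prop := ∃ B : Hq[X], A = qPoly f * B

/-- A real polynomial divides a dual quaternion polynomial. -/
def RDvdD (f : ℝ[X]) (A : DHq[X]) : Prop := ∃ B : DHq[X], A = dPoly f * B

/-- `g` is the greatest common monic real polynomial divisor of a quaternion polynomial `A`
(with itself), i.e. `g = mrpf A`. -/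
def IsMrpfQ (g : ℝ[X]) (A : Hq[X]) : Prop :=
  g.Monic ∧ RDvdQ g A ∧ ∀ f : ℝ[X], f.Monic → RDvdQ f A → f ∣ g

/-- `g` is the greatest common monic real polynomial divisor of `c ∈ ℝ[t]` and a quaternion
polynomial `A`, i.e. `g = mrpf(c, A)`. -/
def IsMrpf2 (g : ℝ[X]) (c : ℝ[X]) (A : Hq[X]) : Prop :=
  g.Monic ∧ g ∣ c ∧ RDvdQ g A ∧
    ∀ f : ℝ[X], f.Monic → f ∣ c → RDvdQ f A → f ∣ g

/-- `g` is the greatest common monic real polynomial divisor of `c ∈ ℝ[t]` and two quaternion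
polynomials `A` and `B`, i.e. `g = mrpf(c, A, B)`. -/
def IsMrpf3 (g : ℝ[X]) (c : ℝ[X]) (A B : Hq[X]) : Prop :=
  g.Monic ∧ g ∣ c ∧ RDvdQ g A ∧ RDvdQ g B ∧
    ∀ f : ℝ[X], f.Monic → f ∣ c → RDvdQ f A → RDvdQ f B → f ∣ g

/-- A quaternion polynomial is reduced: `mrpf = 1`, i.e. it has only constant real
polynomial factors. -/
def ReducedQ (A : Hq[X]) : Prop := ∀ f : ℝ[X], f.Monic → RDvdQ f A → f = 1

/-- A dual quaternion polynomial is reduced: `mrpf = 1`. -/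
def ReducedD (A : DHq[X]) : Prop := ∀ f : ℝ[X], f.Monic → RDvdD f A → f = 1

/-- Boundedness of a (monic reduced) motion polynomial: `mrpf` of its primal part has
no real root, equivalently no linear real polynomial `t - a` divides the primal part. -/
def BoundedD (M : DHq[X]) : Prop :=
  ∀ a : ℝ, ¬ RDvdQ (Polynomial.X - Polynomial.C a) (primal M)

/-- A generic motion polynomial: monic, a motion polynomial, with `mrpf` of the primal
part equal to `1`. -/
def GenericD (M : DHq[X]) : Prop :=
  M.Monic ∧ IsMotion M ∧ ReducedQ (primal M)

/-- The monic linear dual quaternion polynomial `t - p - ε d`. -/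
def lin (p d : Hq) : DHq[X] := mp (Polynomial.X - Polynomial.C p) (-Polynomial.C d)

/-- `M` admits a factorization into monic linear motion polynomial factors. -/
def HasLinFact (M : DHq[X]) : Prop :=
  ∃ L : List DHq, (∀ h ∈ L, IsMotion (Polynomial.X - Polynomial.C h)) ∧
    M = (L.map fun h => Polynomial.X - Polynomial.C h).prod

end

namespace MPF

open Quaternion

noncomputable section

/-- Quaternions over a commutative ring. -/
abbrev HPof (R : Type) [CommRing R] : Type := Quaternion R

/-- Quaternions over real polynomials. -/
abbrev HP : Type := HPof ℝ[X]

/-- constructor -/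
def mk4 (a b c d : ℝ[X]) : HP := ⟨a, b, c, d⟩

@[simp] theorem mk4_re (a b c d : ℝ[X]) : (mk4 a b c d).re = a := rfl
@[simp] theorem mk4_imI (a b c d : ℝ[X]) : (mk4 a b c d).imI = b := rfl
@[simp] theorem mk4_imJ (a b c d : ℝ[X]) : (mk4 a b c d).imJ = c := rfl
@[simp] theorem mk4_imK (a b c d : ℝ[X]) : (mk4 a b c d).imK = d := rfl

/-- Real divisibility. -/
def RD (f : ℝ[X]) (A : HP) : Prop := ∃ B : HP, A = f • B

theorem smul_cancel {f : ℝ[X]} (hf : f ≠ 0) {A B : HP} (h : f • A = f • B) : A = B := by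
  have h1 := congrArg (fun q : HP => q.re) h
  have h2 := congrArg (fun q : HP => q.imI) h
  have h3 := congrArg (fun q : HP => q.imJ) h
  have h4 := congrArg (fun q : HP => q.imK) h
  simp only [Quaternion.re_smul, Quaternion.imI_smul, Quaternion.imJ_smul, Quaternion.imK_smul, smul_eq_mul] at h1 h2 h3 h4
  exact QuaternionAlgebra.ext (mul_left_cancel₀ hf h1) (mul_left_cancel₀ hf h2) (mul_left_cancel₀ hf h3)
    (mul_left_cancel₀ hf h4)

theorem rd_iff {f : ℝ[X]} {A : HP} : RD f A ↔ f ∣ A.re ∧ f ∣ A.imI ∧ f ∣ A.imJ ∧ f ∣ A.imK := by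
  constructor
  · rintro ⟨B, rfl⟩
    simp
  · rintro ⟨⟨a, ha⟩, ⟨b, hb⟩, ⟨c, hc⟩, ⟨d, hd⟩⟩
    exact ⟨mk4 a b c d, by ext1 <;> simp only [Quaternion.re_smul, Quaternion.imI_smul, Quaternion.imJ_smul, Quaternion.imK_smul, smul_eq_mul, ha, hb, hc, hd, mk4_re, mk4_imI, mk4_imJ, mk4_imK]⟩

theorem RD.mul_left {f : ℝ[X]} {A : HP} (h : RD f A) (B : HP) : RD f (B * A) := by
  obtain ⟨C, rfl⟩ := h
  exact ⟨B * C, by rw [mul_smul_comm]⟩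

theorem RD.mul_right {f : ℝ[X]} {A : HP} (h : RD f A) (B : HP) : RD f (A * B) := by
  obtain ⟨C, rfl⟩ := h
  exact ⟨C * B, by rw [smul_mul_assoc]⟩

theorem RD.add {f : ℝ[X]} {A B : HP} (h : RD f A) (h' : RD f B) : RD f (A + B) := by
  obtain ⟨C, rfl⟩ := h
  obtain ⟨D, rfl⟩ := h'
  exact ⟨C + D, by rw [smul_add]⟩

theorem RD.neg {f : ℝ[X]} {A : HP} (h : RD f A) : RD f (-A) := by
  obtain ⟨C, rfl⟩ := h
  exact ⟨-C, by rw [smul_neg]⟩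

theorem RD.sub {f : ℝ[X]} {A B : HP} (h : RD f A) (h' : RD f B) : RD f (A - B) := by
  rw [sub_eq_add_neg]; exact h.add h'.neg

theorem RD.star {f : ℝ[X]} {A : HP} (h : RD f A) : RD f (Star.star A) := by
  rw [rd_iff] at *
  simpa using h

theorem rd_star_iff {f : ℝ[X]} {A : HP} : RD f (star A) ↔ RD f A :=
  ⟨fun h => by simpa using h.star, RD.star⟩

theorem RD.smul {f : ℝ[X]} {A : HP} (h : RD f A) (g : ℝ[X]) : RD f (g • A) := by
  obtain ⟨C, rfl⟩ := h
  exact ⟨g • C, by rw [smul_comm]⟩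

theorem rd_smul_of_dvd {f g : ℝ[X]} (h : f ∣ g) (A : HP) : RD f (g • A) := by
  obtain ⟨k, rfl⟩ := h
  exact ⟨k • A, by rw [mul_smul]⟩

theorem RD.of_dvd {f g : ℝ[X]} {A : HP} (h : RD g A) (hd : f ∣ g) : RD f A := by
  obtain ⟨C, rfl⟩ := h
  exact rd_smul_of_dvd hd C

theorem RD.re {f : ℝ[X]} {A : HP} (h : RD f A) : f ∣ A.re := (rd_iff.1 h).1

theorem rd_coe {f r : ℝ[X]} : RD f (r : HP) ↔ f ∣ r := by
  rw [rd_iff]; simp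

theorem RD.coprime {f g : ℝ[X]} {A : HP} (hc : IsCoprime f g) (h : RD f (g • A)) : RD f A := by
  rw [rd_iff] at *
  simp only [Quaternion.re_smul, Quaternion.imI_smul, Quaternion.imJ_smul, Quaternion.imK_smul, smul_eq_mul] at h
  exact ⟨hc.dvd_of_dvd_mul_left h.1, hc.dvd_of_dvd_mul_left h.2.1, hc.dvd_of_dvd_mul_left h.2.2.1,
    hc.dvd_of_dvd_mul_left h.2.2.2⟩

theorem RD.prime {f g : ℝ[X]} {A : HP} (hp : Irreducible f) (h : RD f (g • A)) : f ∣ g ∨ RD f A := by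
  by_cases hg : f ∣ g
  · exact Or.inl hg
  · exact Or.inr (RD.coprime ((hp.coprime_iff_not_dvd).2 hg) h)

theorem rd_mul_smul {f g : ℝ[X]} {A : HP} (hf : f ≠ 0) : RD (f * g) (f • A) ↔ RD g A := by
  constructor
  · rintro ⟨B, hB⟩
    rw [mul_smul] at hB
    exact ⟨B, smul_cancel hf hB⟩
  · rintro ⟨B, rfl⟩
    exact ⟨B, by rw [mul_smul]⟩

theorem RD.mul_coprime {f g : ℝ[X]} {A : HP} (hc : IsCoprime f g) (h : RD f A) (h' : RD g A) :
    RD (f * g) A := by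
  rw [rd_iff] at *
  exact ⟨hc.mul_dvd h.1 h'.1, hc.mul_dvd h.2.1 h'.2.1, hc.mul_dvd h.2.2.1 h'.2.2.1, hc.mul_dvd h.2.2.2 h'.2.2.2⟩

theorem mul_star_smul (A e : HP) : A * e * star e = Quaternion.normSq e • A := by
  rw [mul_assoc, Quaternion.self_mul_star, Quaternion.mul_coe_eq_smul]

theorem mul_smul_star (A e : HP) : A * star e * e = Quaternion.normSq e • A := by
  rw [mul_assoc, Quaternion.star_mul_self, Quaternion.mul_coe_eq_smul]

theorem star_mul_smul (A e : HP) : star e * (e * A) = Quaternion.normSq e • A := by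
  rw [← mul_assoc, Quaternion.star_mul_self, Quaternion.coe_mul_eq_smul]

theorem smul_star_mul (A e : HP) : e * (star e * A) = Quaternion.normSq e • A := by
  rw [← mul_assoc, Quaternion.self_mul_star, Quaternion.coe_mul_eq_smul]

/-- division -/
theorem div_right {N : ℝ[X]} (hN : N ≠ 0) {A e : HP} (he : Quaternion.normSq e = N) :
    RD N (A * star e) ↔ ∃ B, A = B * e := by
  constructor
  · rintro ⟨B, hB⟩
    refine ⟨B, smul_cancel hN ?_⟩
    rw [← he, ← mul_smul_star, hB, he, smul_mul_assoc]
  · rintro ⟨B, rfl⟩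
    rw [mul_star_smul, he]
    exact ⟨B, rfl⟩

theorem K1 (e x : HP) : e * x * e = (2 * (x * e).re) • e - Quaternion.normSq e • star x := by
  rw [Quaternion.normSq_def']
  ext1 <;> simp only [Quaternion.re_mul, Quaternion.imI_mul, Quaternion.imJ_mul, Quaternion.imK_mul,
    Quaternion.re_sub, Quaternion.imI_sub, Quaternion.imJ_sub, Quaternion.imK_sub,
    Quaternion.re_smul, Quaternion.imI_smul, Quaternion.imJ_smul, Quaternion.imK_smul, smul_eq_mul,
    Quaternion.re_star, Quaternion.imI_star, Quaternion.imJ_star, Quaternion.imK_star] <;> ring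

theorem re_comm (A B : HP) : (A * B).re = (B * A).re := by
  simp only [Quaternion.re_mul]; ring

theorem two_unit : IsUnit (2 : ℝ[X]) := by
  have : (2 : ℝ[X]) = Polynomial.C 2 := (map_ofNat Polynomial.C 2).symm
  rw [this, Polynomial.isUnit_C]
  norm_num

theorem dvd_two {N r : ℝ[X]} : N ∣ 2 * r ↔ N ∣ r := two_unit.dvd_mul_left

theorem exists_tr {N : ℝ[X]} {A : HP} (h : ¬ RD N A) : ∃ x : HP, ¬ N ∣ (x * A).re := by
  by_contra! hc
  apply h
  rw [rd_iff]
  have h1 := hc 1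
  have h2 := hc (mk4 0 1 0 0)
  have h3 := hc (mk4 0 0 1 0)
  have h4 := hc (mk4 0 0 0 1)
  rw [one_mul] at h1
  rw [Quaternion.re_mul] at h2 h3 h4
  simp at h2 h3 h4
  exact ⟨h1, h2, h3, h4⟩

/-- rank one lemma -/
theorem rank_one {N : ℝ[X]} (hN : Irreducible N) {e A B : HP} (he : N ∣ Quaternion.normSq e)
    (h : RD N (A * e * B)) : RD N (A * e) ∨ RD N (e * B) := by
  by_cases hA : RD N (A * e)
  · exact Or.inl hA
  right
  obtain ⟨x, hx⟩ := exists_tr hA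
  have h1 : RD N (e * x * (A * e * B)) := h.mul_left _
  have h2 : e * x * (A * e * B) = (e * (x * A) * e) * B := by simp only [mul_assoc]
  rw [h2, K1, sub_mul, smul_mul_assoc, smul_mul_assoc] at h1
  have h3 := h1.add (rd_smul_of_dvd he (star (x * A) * B))
  rw [sub_add_cancel] at h3
  rcases RD.prime hN h3 with h4 | h4
  · rw [dvd_two, mul_assoc] at h4
    exact absurd h4 hx
  · exact h4

/-- constants -/
def cst (q : Hq) : HP := mk4 (C q.re) (C q.imI) (C q.imJ) (C q.imK)

@[simp] theorem cst_re (q : Hq) : (cst q).re = C q.re := rfl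
@[simp] theorem cst_imI (q : Hq) : (cst q).imI = C q.imI := rfl
@[simp] theorem cst_imJ (q : Hq) : (cst q).imJ = C q.imJ := rfl
@[simp] theorem cst_imK (q : Hq) : (cst q).imK = C q.imK := rfl

theorem cst_mul (p q : Hq) : cst (p * q) = cst p * cst q := by
  ext1 <;> simp [Quaternion.re_mul, Quaternion.imI_mul, Quaternion.imJ_mul, Quaternion.imK_mul]

theorem cst_add (p q : Hq) : cst (p + q) = cst p + cst q := by
  ext1 <;> simp

theorem cst_neg (p : Hq) : cst (-p) = - cst p := by
  ext1 <;> simp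

theorem cst_star (p : Hq) : cst (star p) = star (cst p) := by
  ext1 <;> simp

theorem cst_smul (r : ℝ) (p : Hq) : cst (r • p) = (C r) • cst p := by
  ext1 <;> simp

theorem normSq_cst (p : Hq) : Quaternion.normSq (cst p) = C (Quaternion.normSq p) := by
  simp [Quaternion.normSq_def']

theorem cst_one : cst 1 = 1 := by
  ext1 <;> simp

theorem cst_zero : cst 0 = 0 := by
  ext1 <;> simp

/-- the variable -/
def tX : HP := ((X : ℝ[X]) : HP)

theorem tX_comm (A : HP) : tX * A = A * tX := Quaternion.coe_commutes _ _

theorem star_tX : star tX = tX := Quaternion.star_coe _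

/-- linear motion factor `e - ε d` -/
def LinE (e d : HP) : Prop := ∃ p q : Hq, e = tX - cst p ∧ d = cst q ∧ star d = -d ∧ e * d = d * star e

theorem linE_zero (p : Hq) : LinE (tX - cst p) 0 := ⟨p, 0, rfl, cst_zero.symm, by simp, by simp⟩

theorem linE_of {p q : Hq} (h1 : star q = -q) (h2 : p * q = q * star p) : LinE (tX - cst p) (cst q) := by
  refine ⟨p, q, rfl, rfl, ?_, ?_⟩
  · rw [← cst_star, h1, cst_neg]
  · rw [star_sub, star_tX, ← cst_star, sub_mul, mul_sub, ← cst_mul, ← cst_mul, h2, tX_comm]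

theorem perp (p : Hq) : ∃ q : Hq, q ≠ 0 ∧ star q = -q ∧ p * q = q * star p := by
  have key : ∀ b c d : ℝ, p.imI * b + p.imJ * c + p.imK * d = 0 → (b ≠ 0 ∨ c ≠ 0 ∨ d ≠ 0) →
      ∃ q : Hq, q ≠ 0 ∧ star q = -q ∧ p * q = q * star p := by
    intro b c d h h0
    let q : Hq := ⟨0, b, c, d⟩
    have q1 : q.re = 0 := rfl
    have q2 : q.imI = b := rfl
    have q3 : q.imJ = c := rfl
    have q4 : q.imK = d := rfl
    refine ⟨q, ?_, ?_, ?_⟩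
    · intro hq
      rw [hq] at q2 q3 q4
      simp at q2 q3 q4
      simp [← q2, ← q3, ← q4] at h0
    · ext1 <;> simp [q1]
    · ext1 <;> simp only [Quaternion.re_mul, Quaternion.imI_mul, Quaternion.imJ_mul, Quaternion.imK_mul, Quaternion.re_star, Quaternion.imI_star, Quaternion.imJ_star, Quaternion.imK_star, q1, q2, q3, q4] <;> linarith
  by_cases h : p.imI = 0 ∧ p.imJ = 0
  · exact key 1 0 0 (by simp [h.1]) (by simp)
  · refine key p.imJ (-p.imI) 0 (by ring) ?_
    by_contra! hc
    exact h ⟨by simpa using hc.2.1, hc.1⟩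

theorem LinE.star {e d : HP} (h : LinE e d) : LinE (Star.star e) (Star.star d) := by
  obtain ⟨p, q, rfl, rfl, h1, h2⟩ := h
  refine ⟨Star.star p, Star.star q, ?_, ?_, ?_, ?_⟩
  · rw [star_sub, star_tX, cst_star]
  · rw [cst_star]
  · rw [h1, star_neg, h1]
  · have h3 : Star.star (tX - cst p) = (2 * (tX - cst p).re : ℝ[X]) • (1 : HP) - (tX - cst p) := by
      rw [eq_sub_iff_add_eq, Quaternion.star_add_self']
      ext1 <;> simp
    rw [star_star, h1, mul_neg, neg_mul]
    congr 1
    have h4 : (tX - cst p) = (2 * (tX - cst p).re : ℝ[X]) • (1 : HP) - Star.star (tX - cst p) := by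
      rw [h3]; abel
    rw [h3, sub_mul, h2]
    conv_rhs => rw [h4]
    rw [mul_sub, smul_mul_assoc, mul_smul_comm, one_mul, mul_one]

theorem LinE.re {e d : HP} (h : LinE e d) : (Star.star e * d).re = 0 := by
  obtain ⟨p, q, rfl, rfl, h1, h2⟩ := h
  have a1 : (Star.star (tX - cst p) * cst q).re = ((tX - cst p) * cst q).re := by
    rw [h2, re_comm]
  have a2 : (Star.star (tX - cst p) * cst q).re = - ((tX - cst p) * cst q).re := by
    rw [← Quaternion.re_star, star_mul, star_star, h1, neg_mul, Quaternion.re_neg, re_comm]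
  have a3 : 2 * (Star.star (tX - cst p) * cst q).re = 0 := by
    linear_combination a1 + a2
  exact (two_unit.mul_right_eq_zero).1 a3

theorem normSq_lin (p : Hq) : Quaternion.normSq (tX - cst p) =
    (X - C p.re) ^ 2 + C (p.imI ^ 2 + p.imJ ^ 2 + p.imK ^ 2) := by
  rw [Quaternion.normSq_def']
  simp [tX]
  ring

theorem lin_rem {N : ℝ[X]} (hm : N.Monic) (h2 : N.natDegree = 2) (r : ℝ[X]) :
    ∃ a b : ℝ, N ∣ r - (C a * X + C b) := by
  have h := Polynomial.natDegree_modByMonic_lt r hm (by intro h; simp [h] at h2)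
  obtain ⟨a, b, hab⟩ := Polynomial.exists_eq_X_add_C_of_natDegree_le_one (p := r %ₘ N) (by omega)
  refine ⟨a, b, r /ₘ N, ?_⟩
  rw [← hab]
  have := Polynomial.modByMonic_add_div r N
  linear_combination -this

theorem RD.normSq {f : ℝ[X]} {A B : HP} (h : RD f (A - B)) :
    f ∣ Quaternion.normSq A - Quaternion.normSq B := by
  rw [← rd_coe, Quaternion.coe_sub, ← Quaternion.self_mul_star, ← Quaternion.self_mul_star]
  have : A * Star.star A - B * Star.star B = (A - B) * Star.star A + B * Star.star (A - B) := by
    rw [star_sub]; noncomm_ring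
  rw [this]
  exact (h.mul_right _).add (h.star.mul_left _)

theorem normSq_le (q : Hq) (h : Quaternion.normSq q = 0) : q = 0 := Quaternion.normSq_eq_zero.1 h

theorem existsE {N : ℝ[X]} (hm : N.Monic) (h2 : N.natDegree = 2) {D : HP} (hD : ¬ RD N D)
    (h : N ∣ Quaternion.normSq D) : ∃ p : Hq, Quaternion.normSq (tX - cst p) = N ∧
      RD N (D * star (tX - cst p)) := by
  obtain ⟨a1, b1, h1⟩ := lin_rem hm h2 D.re
  obtain ⟨a2, b2, h2'⟩ := lin_rem hm h2 D.imI
  obtain ⟨a3, b3, h3⟩ := lin_rem hm h2 D.imJ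
  obtain ⟨a4, b4, h4⟩ := lin_rem hm h2 D.imK
  let A : Hq := ⟨a1, a2, a3, a4⟩
  let B : Hq := ⟨b1, b2, b3, b4⟩
  have hA1 : A.re = a1 := rfl
  have hA2 : A.imI = a2 := rfl
  have hA3 : A.imJ = a3 := rfl
  have hA4 : A.imK = a4 := rfl
  have hB1 : B.re = b1 := rfl
  have hB2 : B.imI = b2 := rfl
  have hB3 : B.imJ = b3 := rfl
  have hB4 : B.imK = b4 := rfl
  clear_value A B
  have hr : RD N (D - ((X : ℝ[X]) • cst A + cst B)) := by
    rw [rd_iff]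
    simp [hA1, hA2, hA3, hA4, hB1, hB2, hB3, hB4, mul_comm X]
    exact ⟨h1, h2', h3, h4⟩
  have hn0 : N ∣ Quaternion.normSq ((X : ℝ[X]) • cst A + cst B) := by
    have := hr.normSq
    exact (dvd_sub_right h).1 this
  have hexp : Quaternion.normSq ((X : ℝ[X]) • cst A + cst B) = C (Quaternion.normSq A) * X ^ 2 +
      C (2 * (A.re * B.re + A.imI * B.imI + A.imJ * B.imJ + A.imK * B.imK)) * X
      + C (Quaternion.normSq B) := by
    simp [Quaternion.normSq_def']
    have h2C : (C (2:ℝ) : ℝ[X]) = 2 := map_ofNat Polynomial.C 2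
    rw [h2C]
    ring
  have hN0 : N ≠ 0 := hm.ne_zero
  have hs : Quaternion.normSq ((X : ℝ[X]) • cst A + cst B) = C (Quaternion.normSq A) * N := by
    obtain ⟨k, hk⟩ := hn0
    by_cases hk0 : k = 0
    · rw [hk0, mul_zero] at hk
      have := congrArg (fun r : ℝ[X] => r.coeff 2) (hexp.symm.trans hk)
      simp [coeff_X, coeff_C] at this
      rw [hk, this]; simp
    have hd : (Quaternion.normSq ((X : ℝ[X]) • cst A + cst B)).natDegree ≤ 2 := by
      rw [hexp]; exact natDegree_quadratic_le
    rw [hk, natDegree_mul hN0 hk0, h2] at hd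
    have hk1 : k = C (k.coeff 0) := eq_C_of_natDegree_eq_zero (by omega)
    have hc := congrArg (fun r : ℝ[X] => r.coeff 2) (hexp.symm.trans hk)
    rw [hk1] at hc
    have hN2 : N.coeff 2 = 1 := by rw [← h2]; exact hm
    simp [coeff_X, coeff_C, hN2] at hc
    rw [hk, hc, ← hk1, mul_comm]
  have hA : Quaternion.normSq A ≠ 0 := by
    intro h0
    have hA0 := normSq_le A h0
    rw [h0, C_0, zero_mul, hexp] at hs
    have := congrArg (fun r : ℝ[X] => r.coeff 0) hs
    simp [h0] at this
    rw [hA0, this, cst_zero, smul_zero, add_zero, sub_zero] at hr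
    exact hD hr
  have hA' : A ≠ 0 := by rintro rfl; simp at hA
  refine ⟨-(A⁻¹ * B), ?_⟩
  have hf : cst A * (tX - cst (-(A⁻¹ * B))) = (X : ℝ[X]) • cst A + cst B := by
    rw [cst_neg, sub_neg_eq_add, mul_add, ← cst_mul, ← mul_assoc, mul_inv_cancel₀ hA', one_mul, tX,
      Quaternion.mul_coe_eq_smul]
  have hC : C (Quaternion.normSq A) ≠ 0 := by simpa using hA
  have hne : Quaternion.normSq (tX - cst (-(A⁻¹ * B))) = N := by
    apply mul_left_cancel₀ hC
    rw [← hs, ← hf, map_mul, normSq_cst]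
  refine ⟨hne, ?_⟩
  have h5 := (hr.mul_right (star (tX - cst (-(A⁻¹ * B))))).add (⟨cst A, rfl⟩ : RD N (N • cst A))
  have h6 : N • cst A = ((X : ℝ[X]) • cst A + cst B) * star (tX - cst (-(A⁻¹ * B))) := by
    rw [← hf, mul_star_smul, hne]
  rw [h6, ← add_mul, sub_add_cancel] at h5
  exact h5

theorem irr_deg {f : ℝ[X]} (hf : Irreducible f) {Q : HP} (hd : f ∣ Quaternion.normSq Q) (h : ¬ RD f Q) :
    f.natDegree = 2 := by
  have h1 := hf.natDegree_le_two
  have h2 := hf.natDegree_pos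
  by_contra hne
  have h3 : f.natDegree = 1 := by omega
  apply h
  obtain ⟨a, ha⟩ := Polynomial.exists_root_of_degree_eq_one (Polynomial.degree_eq_iff_natDegree_eq_of_pos (by norm_num) |>.2 h3)
  have h4 : X - C a ∣ f := dvd_iff_isRoot.2 ha
  have h5 : f ∣ X - C a := (irreducible_X_sub_C a).dvd_symm hf h4
  have h6 : (Quaternion.normSq Q).eval a = 0 := dvd_iff_isRoot.1 (h4.trans hd)
  rw [Quaternion.normSq_def'] at h6
  simp only [eval_add, eval_pow] at h6
  rw [rd_iff]
  refine ⟨h5.trans (dvd_iff_isRoot.2 ?_), h5.trans (dvd_iff_isRoot.2 ?_), h5.trans (dvd_iff_isRoot.2 ?_), h5.trans (dvd_iff_isRoot.2 ?_)⟩ <;>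
  · rw [IsRoot.def]
    nlinarith [sq_nonneg (eval a Q.re), sq_nonneg (eval a Q.imI), sq_nonneg (eval a Q.imJ), sq_nonneg (eval a Q.imK)]

theorem normSq_ne {Q : HP} (h : ∀ f, Irreducible f → ¬ RD f Q) : Quaternion.normSq Q ≠ 0 := by
  intro h0
  have := irr_deg (irreducible_X (R := ℝ)) (by rw [h0]; exact dvd_zero _) (h X irreducible_X)
  simp at this

/-- constants as ring hom -/
def cstHom : Hq →+* HP where
  toFun := cst
  map_one' := cst_one
  map_zero' := cst_zero
  map_add' := cst_add
  map_mul' := cst_mul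

/-- the isomorphism, as ring hom -/
def psi0 : Hq[X] →+* HP := Polynomial.eval₂RingHom' cstHom tX (fun a => (tX_comm (cst a)).symm)

theorem psi0_C (a : Hq) : psi0 (C a) = cst a := by
  simp [psi0, cstHom]

theorem psi0_X : psi0 X = tX := by
  change Polynomial.eval₂ cstHom tX X = tX
  exact Polynomial.eval₂_X _ _

theorem psi0_coeff (A : Hq[X]) : (∀ n, (psi0 A).re.coeff n = (A.coeff n).re) ∧
    (∀ n, (psi0 A).imI.coeff n = (A.coeff n).imI) ∧ (∀ n, (psi0 A).imJ.coeff n = (A.coeff n).imJ) ∧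
    (∀ n, (psi0 A).imK.coeff n = (A.coeff n).imK) := by
  induction A using Polynomial.induction_on' with
  | add p q hp hq =>
    refine ⟨fun n => ?_, fun n => ?_, fun n => ?_, fun n => ?_⟩
    · simp [hp.1, hq.1]
    · simp [hp.2.1, hq.2.1]
    · simp [hp.2.2.1, hq.2.2.1]
    · simp [hp.2.2.2, hq.2.2.2]
  | monomial m a =>
    have h : psi0 (monomial m a) = (X ^ m : ℝ[X]) • cst a := by
      rw [← C_mul_X_pow_eq_monomial, map_mul, map_pow, psi0_C, psi0_X, tX, ← Quaternion.coe_pow,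
        Quaternion.mul_coe_eq_smul]
    rw [h]
    refine ⟨fun n => ?_, fun n => ?_, fun n => ?_, fun n => ?_⟩ <;>
    · simp [coeff_monomial, coeff_X_pow_mul', coeff_C]
      split_ifs <;> first | rfl | (exfalso; omega) | simp

theorem psi0_inj : Function.Injective psi0 := by
  intro A B h
  ext n : 1
  have hA := psi0_coeff A
  have hB := psi0_coeff B
  rw [h] at hA
  ext1
  · rw [← hA.1, hB.1]
  · rw [← hA.2.1, hB.2.1]
  · rw [← hA.2.2.1, hB.2.2.1]
  · rw [← hA.2.2.2, hB.2.2.2]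

theorem psi0_qPoly (f : ℝ[X]) : psi0 (qPoly f) = (f : HP) := by
  have h := psi0_coeff (qPoly f)
  ext1 <;> ext n
  · rw [h.1]; simp [qPoly]
  · rw [h.2.1]; simp [qPoly]
  · rw [h.2.2.1]; simp [qPoly]
  · rw [h.2.2.2]; simp [qPoly]

theorem psi0_surj : Function.Surjective psi0 := by
  intro A
  let i : Hq := ⟨0, 1, 0, 0⟩
  let j : Hq := ⟨0, 0, 1, 0⟩
  let k : Hq := ⟨0, 0, 0, 1⟩
  refine ⟨qPoly A.re + qPoly A.imI * C i + qPoly A.imJ * C j + qPoly A.imK * C k, ?_⟩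
  simp only [map_add, map_mul, psi0_qPoly, psi0_C, Quaternion.coe_mul_eq_smul]
  have i1 : i.re = 0 := rfl
  have i2 : i.imI = 1 := rfl
  have i3 : i.imJ = 0 := rfl
  have i4 : i.imK = 0 := rfl
  have j1 : j.re = 0 := rfl
  have j2 : j.imI = 0 := rfl
  have j3 : j.imJ = 1 := rfl
  have j4 : j.imK = 0 := rfl
  have k1 : k.re = 0 := rfl
  have k2 : k.imI = 0 := rfl
  have k3 : k.imJ = 0 := rfl
  have k4 : k.imK = 1 := rfl
  clear_value i j k
  ext1 <;> simp [*]

/-- the isomorphism -/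
def psi : Hq[X] ≃+* HP := RingEquiv.ofBijective psi0 ⟨psi0_inj, psi0_surj⟩

theorem psi_apply (A : Hq[X]) : psi A = psi0 A := rfl

theorem cstar_coeff {R : Type*} [Ring R] [Star R] (h0 : star (0 : R) = 0) (A : R[X]) (n : ℕ) :
    (cstar A).coeff n = star (A.coeff n) := by
  rw [cstar, Polynomial.sum_def, finsetSum_coeff]
  simp only [coeff_C_mul, coeff_X_pow, mul_ite, mul_one, mul_zero, Finset.sum_ite_eq, mem_support_iff]
  split_ifs with h
  · rfl
  · have h' : A.coeff n = 0 := by simpa using h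
    rw [h', h0]

theorem psi_cstar (A : Hq[X]) : psi (cstar A) = star (psi A) := by
  have h := psi0_coeff (cstar A)
  have h' := psi0_coeff A
  simp only [cstar_coeff (star_zero Hq)] at h
  simp only [psi_apply]
  ext1 <;> ext n
  · rw [h.1]; simp [h'.1]
  · rw [h.2.1]; simp [h'.2.1]
  · rw [h.2.2.1]; simp [h'.2.2.1]
  · rw [h.2.2.2]; simp [h'.2.2.2]

theorem rdvdQ_iff {f : ℝ[X]} {A : Hq[X]} : RDvdQ f A ↔ RD f (psi A) := by
  constructor
  · rintro ⟨B, rfl⟩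
    exact ⟨psi B, by rw [map_mul, psi_apply, psi0_qPoly, Quaternion.coe_mul_eq_smul]⟩
  · rintro ⟨B, hB⟩
    refine ⟨psi.symm B, psi.injective ?_⟩
    rw [map_mul, psi_apply (qPoly f), psi0_qPoly, Quaternion.coe_mul_eq_smul, hB, RingEquiv.apply_symm_apply]

theorem mp_coeff (P D : Hq[X]) (n : ℕ) : (mp P D).coeff n = inl (P.coeff n) + inr (D.coeff n) := by
  rw [mp, coeff_add, coeff_C_mul, dhQ, dhQ, coeff_map, coeff_map]
  ext <;> simp

theorem mp_inj {P D P' D' : Hq[X]} (h : mp P D = mp P' D') : P = P' ∧ D = D' := by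
  constructor
  · ext n : 1
    have := congrArg (fun A : DHq[X] => (A.coeff n).fst) h
    simpa [mp_coeff] using this
  · ext n : 1
    have := congrArg (fun A : DHq[X] => (A.coeff n).snd) h
    simpa [mp_coeff] using this

theorem primal_mp (P D : Hq[X]) : primal (mp P D) = P := by
  ext n : 1
  rw [primal, coeff_map, mp_coeff]
  simp

theorem dhQ_mul (P P' : Hq[X]) : dhQ (P * P') = dhQ P * dhQ P' := Polynomial.map_mul _
theorem dhQ_add (P P' : Hq[X]) : dhQ (P + P') = dhQ P + dhQ P' := Polynomial.map_add _

theorem eps_comm (D : DHq[X]) : D * Polynomial.C ε = Polynomial.C ε * D := by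
  ext n : 1
  rw [coeff_mul_C, coeff_C_mul]
  exact (DualNumber.commute_eps_left _).symm

theorem mp_mul (P D P' D' : Hq[X]) : mp P D * mp P' D' = mp (P * P') (P * D' + D * P') := by
  have h2 : (Polynomial.C ε * Polynomial.C ε : DHq[X]) = 0 := by
    rw [← C_mul, DualNumber.eps_mul_eps, C_0]
  simp only [mp, dhQ_mul, dhQ_add, add_mul, mul_add]
  have h3 : dhQ P * (C ε * dhQ D') = C ε * (dhQ P * dhQ D') := by
    rw [← mul_assoc, eps_comm, mul_assoc]
  have h4 : C ε * dhQ D * (C ε * dhQ D') = 0 := by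
    rw [mul_assoc, ← mul_assoc (dhQ D), eps_comm, mul_assoc (C ε) (dhQ D), ← mul_assoc, h2, zero_mul]
  rw [h3, h4, mul_assoc]
  abel

theorem dPoly_eq (f : ℝ[X]) : dPoly f = mp (qPoly f) 0 := by
  simp [dPoly, mp, dhQ]

theorem one_eq : (1 : DHq[X]) = mp 1 0 := by
  simp [mp, dhQ]

theorem star_zero_DHq : star (0 : DHq) = 0 := by
  change inl (star (0 : Hq)) + inr (star (0 : Hq)) = (0 : DHq)
  simp

theorem cstar_mp (P D : Hq[X]) : cstar (mp P D) = mp (cstar P) (cstar D) := by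
  ext n : 1
  rw [cstar_coeff star_zero_DHq, mp_coeff, mp_coeff, cstar_coeff (star_zero Hq), cstar_coeff (star_zero Hq)]
  change inl (star _) + inr (star _) = (_ : DHq)
  simp

theorem lin_eq (h : DHq) : (X - C h : DHq[X]) = mp (X - C h.fst) (- C h.snd) := by
  ext n : 1
  rw [mp_coeff]
  ext <;> simp [coeff_X, coeff_C] <;> split_ifs <;> simp

theorem isMotion_mp {P D : Hq[X]} : IsMotion (mp P D) ↔
    psi P ≠ 0 ∧ (psi D * star (psi P)).re = 0 := by
  have key : ∀ A : HP, A + star A = 0 ↔ A.re = 0 := by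
    intro A
    rw [Quaternion.self_add_star', ← Quaternion.coe_zero, Quaternion.coe_inj]
    exact two_unit.mul_right_eq_zero
  have key2 : P * cstar D + D * cstar P = 0 ↔ (psi D * star (psi P)).re = 0 := by
    rw [← key, ← psi.map_eq_zero_iff]
    simp only [map_add, map_mul, psi_cstar, star_mul, star_star]
    rw [add_comm]
  have key3 : ∀ A : HP, normSq A = 0 → A = 0 := by
    intro A h
    by_contra hA
    have h4 : ∀ f : ℝ[X], Irreducible f → f.natDegree = 1 → RD f A := by
      intro f hf h1
      by_contra hc
      have := irr_deg hf (by rw [h]; exact dvd_zero _) hc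
      omega
    have h5 : ∀ r : ℝ[X], (∀ f : ℝ[X], Irreducible f → f.natDegree = 1 → f ∣ r) → r = 0 := by
      intro r hr
      apply Polynomial.funext
      intro a
      rw [eval_zero]
      exact dvd_iff_isRoot.1 (hr _ (irreducible_X_sub_C a) (natDegree_X_sub_C a))
    apply hA
    ext1
    · exact h5 _ fun f hf h1 => (rd_iff.1 (h4 f hf h1)).1
    · exact h5 _ fun f hf h1 => (rd_iff.1 (h4 f hf h1)).2.1
    · exact h5 _ fun f hf h1 => (rd_iff.1 (h4 f hf h1)).2.2.1
    · exact h5 _ fun f hf h1 => (rd_iff.1 (h4 f hf h1)).2.2.2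
  rw [IsMotion, cstar_mp, mp_mul]
  constructor
  · rintro ⟨f, hf, h⟩
    rw [dPoly_eq] at h
    obtain ⟨h1, h2⟩ := mp_inj h
    refine ⟨?_, key2.1 h2⟩
    intro h0
    rw [psi.map_eq_zero_iff] at h0
    rw [h0, zero_mul] at h1
    apply hf
    have := congrArg psi0 h1
    rw [map_zero, psi0_qPoly] at this
    exact Quaternion.coe_injective this.symm
  · rintro ⟨h1, h2⟩
    refine ⟨normSq (psi P), fun h => h1 (key3 _ h), ?_⟩
    rw [dPoly_eq, key2.2 h2]
    congr 1
    apply psi.injective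
    rw [map_mul, psi_cstar, psi_apply (qPoly _), psi0_qPoly, Quaternion.self_mul_star]

theorem isMotion_lin (h : DHq) : IsMotion (X - C h : DHq[X]) ↔ LinE (tX - cst h.fst) (cst h.snd) := by
  have hp : psi (X - C h.fst) = tX - cst h.fst := by
    rw [map_sub, psi_apply, psi_apply, psi0_X, psi0_C]
  have hd : psi (-C h.snd) = -cst h.snd := by
    rw [map_neg, psi_apply, psi0_C]
  rw [lin_eq, isMotion_mp, hp, hd, neg_mul, Quaternion.re_neg, neg_eq_zero]
  constructor
  · rintro ⟨-, h2⟩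
    have h2' : C h.snd.re * X - C ((h.snd * star h.fst).re) = 0 := by
      rw [← h2, star_sub, star_tX, ← cst_star, mul_sub, ← cst_mul]
      simp [tX]
    have h3 : h.snd.re = 0 := by
      have := congrArg (fun r : ℝ[X] => r.coeff 1) h2'
      simpa [coeff_C] using this
    have h4 : (h.snd * star h.fst).re = 0 := by
      have := congrArg (fun r : ℝ[X] => r.coeff 0) h2'
      rw [coeff_sub, coeff_mul_X_zero, coeff_C_zero, coeff_zero, zero_sub, neg_eq_zero] at this
      exact this
    have h5 : star h.snd = - h.snd := by
      ext1 <;> simp [h3]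
    refine linE_of h5 ?_
    have h6 : (h.snd * star h.fst) + star (h.snd * star h.fst) = 0 := by
      rw [Quaternion.self_add_star', h4]; simp
    rw [star_mul, star_star, h5, mul_neg, ← sub_eq_add_neg, sub_eq_zero] at h6
    exact h6.symm
  · intro hl
    refine ⟨?_, ?_⟩
    · intro h0
      have := congrArg (fun A : HP => A.re.coeff 1) h0
      simp [tX, coeff_C] at this
    · rw [re_comm]
      exact hl.re

/-- factorizations -/
inductive Fac : HP → HP → Prop
  | one : Fac 1 0
  | step {P D e d : HP} : LinE e d → Fac P D → Fac (P * e) (D * e - P * d)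

theorem psi_sub_C (p : Hq) : psi (X - C p) = tX - cst p := by
  rw [map_sub, psi_apply, psi_apply, psi0_X, psi0_C]

theorem fac_of_hasLinFact (L : List DHq) (h : ∀ h ∈ L, IsMotion (X - C h : DHq[X])) :
    ∃ P D : Hq[X], (L.map fun h => (X - C h : DHq[X])).prod = mp P D ∧ Fac (psi P) (psi D) := by
  induction L using List.reverseRecOn with
  | nil => exact ⟨1, 0, by simpa using one_eq, by simpa using Fac.one⟩
  | append_singleton L a ih =>
    obtain ⟨P, D, h1, h2⟩ := ih (fun x hx => h x (by simp [hx]))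
    have ha := (isMotion_lin a).1 (h a (by simp))
    refine ⟨P * (X - C a.fst), P * (- C a.snd) + D * (X - C a.fst), ?_, ?_⟩
    · rw [List.map_append, List.prod_append, h1]
      simp only [List.map_cons, List.map_nil, List.prod_cons, List.prod_nil, mul_one]
      rw [lin_eq, mp_mul]
    · have := Fac.step ha h2
      simp only [map_mul, map_add, map_neg, psi_sub_C]
      rw [psi_apply (C a.snd), psi0_C, mul_neg, add_comm, ← sub_eq_add_neg]
      exact this

theorem hasLinFact_mp {P D : Hq[X]} (h : HasLinFact (mp P D)) : Fac (psi P) (psi D) := by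
  obtain ⟨L, h1, h2⟩ := h
  obtain ⟨P', D', h3, h4⟩ := fac_of_hasLinFact L h1
  rw [h3] at h2
  obtain ⟨rfl, rfl⟩ := mp_inj h2
  exact h4

theorem mp_step (P D : HP) (p q : Hq) :
    mp (psi.symm (P * (tX - cst p))) (psi.symm (D * (tX - cst p) - P * cst q)) =
    mp (psi.symm P) (psi.symm D) * (X - C (inl p + inr q : DHq)) := by
  rw [lin_eq, mp_mul]
  congr 1
  · apply psi.injective
    simp [psi_sub_C]
  · apply psi.injective
    simp [psi_sub_C]
    rw [psi_apply (C q), psi0_C, ← sub_eq_neg_add]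

theorem hasLinFact_of_fac {P D : HP} (h : Fac P D) : HasLinFact (mp (psi.symm P) (psi.symm D)) := by
  induction h with
  | one => exact ⟨[], by simp, by simpa using one_eq.symm⟩
  | step hl _ ih =>
    obtain ⟨L, h1, h2⟩ := ih
    obtain ⟨p, q, rfl, rfl, h3, h4⟩ := hl
    refine ⟨L ++ [inl p + inr q], ?_, ?_⟩
    · intro h hh
      rw [List.mem_append, List.mem_singleton] at hh
      rcases hh with hh | rfl
      · exact h1 h hh
      · rw [isMotion_lin]
        have e1 : (inl p + inr q : DHq).fst = p := by simp
        have e2 : (inl p + inr q : DHq).snd = q := by simp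
        rw [e1, e2]
        exact ⟨p, q, rfl, rfl, h3, h4⟩
    · rw [mp_step, h2]
      simp

/-- monic motion polynomials, in HP -/
def Mon (P D : HP) : Prop := (mp (psi.symm P) (psi.symm D)).Monic

theorem Mon.of_step {P D e d : HP} (hl : LinE e d) (h : Mon (P * e) (D * e - P * d)) : Mon P D := by
  obtain ⟨p, q, rfl, rfl, h3, h4⟩ := hl
  rw [Mon, mp_step] at h
  exact Polynomial.Monic.of_mul_monic_right (monic_X_sub_C _) h

theorem Mon.star {P D : HP} (h : Mon P D) : Mon (Star.star P) (Star.star D) := by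
  have h1 : ∀ A : HP, psi.symm (Star.star A) = cstar (psi.symm A) := by
    intro A
    apply psi.injective
    rw [psi_cstar]; simp
  rw [Mon] at *
  rw [h1, h1, ← cstar_mp]
  set M := mp (psi.symm P) (psi.symm D)
  have hs : ∀ n, (cstar M).coeff n = Star.star (M.coeff n) := cstar_coeff star_zero_DHq M
  apply monic_of_natDegree_le_of_coeff_eq_one M.natDegree
  · rw [natDegree_le_iff_coeff_eq_zero]
    intro n hn
    rw [hs, coeff_eq_zero_of_natDegree_lt hn, star_zero_DHq]
  · rw [hs, coeff_natDegree, h.leadingCoeff]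
    change inl (Star.star (1 : DHq).fst) + inr (Star.star (1 : DHq).snd) = (1 : DHq)
    simp

theorem Mon.unit {P D : HP} (h : Mon P D) (hP : IsUnit P) : P = 1 ∧ D = 0 := by
  rw [Mon] at h
  have h1 : (psi.symm P).Monic := by
    rw [← primal_mp (psi.symm P) (psi.symm D)]
    exact h.map _
  have hu : IsUnit (psi.symm P) := hP.map psi.symm
  have h2 : (mp (psi.symm P) (psi.symm D)).natDegree = (psi.symm P).natDegree := by
    conv_rhs => rw [← primal_mp (psi.symm P) (psi.symm D), primal]
    rw [h.natDegree_map]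
  rw [natDegree_eq_zero_of_isUnit hu, h.natDegree_eq_zero, one_eq] at h2
  obtain ⟨a, b⟩ := mp_inj h2
  constructor
  · simpa using a
  · simpa using b

theorem Fac.left {P D e d : HP} (hl : LinE e d) (h : Fac P D) : Fac (e * P) (e * D - d * P) := by
  induction h with
  | one =>
    have := Fac.step hl Fac.one
    simpa using this
  | step hl' _ ih =>
    rename_i P D e1 d1 _
    have := Fac.step hl' ih
    have h1 : e * (P * e1) = e * P * e1 := by rw [mul_assoc]
    have h2 : e * (D * e1 - P * d1) - d * (P * e1) = (e * D - d * P) * e1 - e * P * d1 := by noncomm_ring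
    rw [h1, h2]
    exact this

theorem Fac.star {P D : HP} (h : Fac P D) : Fac (Star.star P) (Star.star D) := by
  induction h with
  | one => simpa using Fac.one
  | step hl _ ih =>
    rw [star_mul, star_sub, star_mul, star_mul]
    exact Fac.left hl.star ih

/-- standing hypotheses -/
structure Good (c : ℝ[X]) (Q D : HP) : Prop where
  c0 : c ≠ 0
  cdeg : ∀ f, Irreducible f → f ∣ c → f.natDegree = 2
  qred : ∀ f, Irreducible f → ¬ RD f Q
  rd : ∀ f, Irreducible f → f ∣ c → ¬ RD f D
  mot : (star Q * D).re = 0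

/-- the divisibility condition -/
def Cond (c : ℝ[X]) (Q D : HP) : Prop :=
  ∀ f, f ∣ c → RD f (star Q * D) → RD f (D * star Q) → c * f ∣ normSq D

theorem Good.star {c : ℝ[X]} {Q D : HP} (h : Good c Q D) : Good c (Star.star Q) (Star.star D) where
  c0 := h.c0
  cdeg := h.cdeg
  qred := fun f hf h1 => h.qred f hf (rd_star_iff.1 h1)
  rd := fun f hf hc h1 => h.rd f hf hc (rd_star_iff.1 h1)
  mot := by
    rw [← star_mul, Quaternion.re_star, re_comm]
    exact h.mot

theorem Cond.star {c : ℝ[X]} {Q D : HP} (h : Cond c Q D) : Cond c (Star.star Q) (Star.star D) := by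
  intro f hf h1 h2
  rw [← star_mul, rd_star_iff] at h1 h2
  rw [Quaternion.normSq_star]
  exact h f hf h2 h1

/-- reduction step -/
def Step (c : ℝ[X]) (Q D : HP) : Prop :=
  ∃ (c' : ℝ[X]) (Q' D' e d : HP), LinE e d ∧ c • Q = (c' • Q') * e ∧ D = D' * e - (c' • Q') * d ∧
    Good c' Q' D' ∧ Cond c' Q' D' ∧
    2 * c'.natDegree + (normSq Q').natDegree < 2 * c.natDegree + (normSq Q).natDegree

theorem step_of_div {c N : ℝ[X]} {Q D Q' D' e d : HP} (hG : Good c Q D) (hl : LinE e d)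
    (he : normSq e = N) (h2 : N.natDegree = 2) (hQ : Q = Q' * e) (hD : D = D' * e - (c • Q') * d)
    (hC : Cond c Q' D') : Step c Q D := by
  have hN0 : N ≠ 0 := by rintro rfl; simp at h2
  have hq' : ∀ f, Irreducible f → ¬ RD f Q' := by
    intro f hf h
    apply hG.qred f hf
    rw [hQ]; exact h.mul_right _
  refine ⟨c, Q', D', e, d, hl, ?_, hD, ⟨hG.c0, hG.cdeg, hq', ?_, ?_⟩, hC, ?_⟩
  · rw [hQ, smul_mul_assoc]
  · intro f hf hc h
    apply hG.rd f hf hc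
    rw [hD, smul_mul_assoc]
    exact (h.mul_right _).sub (rd_smul_of_dvd hc _)
  · have h3 : (star Q * (D' * e)).re = 0 := by
      have h4 : D' * e = D + (c • Q') * d := by rw [hD]; abel
      rw [h4, mul_add, Quaternion.re_add, hG.mot, zero_add, hQ, star_mul, smul_mul_assoc, mul_smul_comm,
        Quaternion.re_smul, mul_assoc, star_mul_smul, mul_smul_comm, Quaternion.re_smul, hl.re]
      simp
    have h5 : (star Q * (D' * e)).re = N * (star Q' * D').re := by
      rw [hQ, star_mul, re_comm, ← mul_assoc, mul_star_smul, smul_mul_assoc, Quaternion.re_smul, re_comm, he,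
        smul_eq_mul]
    rw [h5] at h3
    exact (mul_eq_zero.1 h3).resolve_left hN0
  · have h6 : normSq Q = normSq Q' * N := by rw [hQ, map_mul, he]
    rw [h6, natDegree_mul (normSq_ne hq') hN0, h2]
    omega

theorem isUnit_normSq_cst {q : Hq} (h : q ≠ 0) : IsUnit (normSq (cst q)) := by
  rw [normSq_cst, isUnit_C, isUnit_iff_ne_zero]
  exact fun h' => h (normSq_le q h')

theorem not_rd_mul_cst {N : ℝ[X]} (hN : Irreducible N) {Q : HP} (hQ : ¬ RD N Q) {q : Hq} (h : q ≠ 0) :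
    ¬ RD N (Q * cst q) := by
  intro h1
  have h2 := h1.mul_right (star (cst q))
  rw [mul_star_smul] at h2
  rcases RD.prime hN h2 with h3 | h3
  · exact hN.not_isUnit (isUnit_of_dvd_unit h3 (isUnit_normSq_cst h))
  · exact hQ h3

theorem find_d {N : ℝ[X]} (hm : N.Monic) (hN : Irreducible N) (h2 : N.natDegree = 2) {Q D Q' : HP} {p : Hq}
    (he : normSq (tX - cst p) = N) (hQ : Q = Q' * (tX - cst p)) (hred : ¬ RD N Q)
    (hmot : (star Q * D).re = 0) (k : ℝ) (hk : k ≠ 0) :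
    ∃ d, LinE (tX - cst p) d ∧ RD N (D * star (tX - cst p) + C k • (Q * d)) := by
  obtain ⟨q0, hq0, hs, hc⟩ := perp p
  have hl := linE_of hs hc
  obtain ⟨-, -, -, -, -, hed⟩ := hl
  set e : HP := tX - cst p with hedef
  have hY1 : RD N (star Q * (D * star e)) := by
    have h3 : star Q * (D * star e) = star e * (star Q' * D) * star e := by
      rw [hQ, star_mul]; simp only [mul_assoc]
    have h4 : (star Q' * D * star e).re = 0 := by
      rw [re_comm, ← mul_assoc, ← star_mul, ← hQ, hmot]
    rw [h3, K1, h4, mul_zero, zero_smul, zero_sub, Quaternion.normSq_star, he]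
    exact RD.neg ⟨_, rfl⟩
  have claim : ∀ x : HP, RD N ((2 * (x * (Q * cst q0)).re) • (D * star e) -
      (2 * (x * (D * star e)).re) • (Q * cst q0)) := by
    intro x
    have c1 : Q * cst q0 * x * (D * star e) = (2 * (x * (Q * cst q0)).re) • (D * star e) -
        star (cst q0 * x) * (star Q * (D * star e)) := by
      have c2 : Q * cst q0 * x = ((2 * (x * (Q * cst q0)).re : ℝ[X]) : HP) - star (Q * (cst q0 * x)) := by
        rw [eq_sub_iff_add_eq, ← mul_assoc, Quaternion.self_add_star', re_comm]
      rw [c2, sub_mul, Quaternion.coe_mul_eq_smul, star_mul, mul_assoc]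
    have c3 : Q * cst q0 * x * (D * star e) = (2 * (x * (D * star e)).re) • (Q * cst q0)
        - N • (Q' * cst q0 * star (x * D)) := by
      have c4 : Q * cst q0 * x * (D * star e) = Q' * cst q0 * (star e * (x * D) * star e) := by
        rw [hQ, mul_assoc Q', hed]; simp only [mul_assoc]
      rw [c4, K1, Quaternion.normSq_star, he, mul_sub, mul_smul_comm, mul_smul_comm, mul_assoc Q', ← hed,
        ← mul_assoc Q', ← hQ, mul_assoc x]
    have c5 := (hY1.mul_left (star (cst q0 * x))).sub (⟨Q' * cst q0 * star (x * D), rfl⟩ : RD N (N • (Q' * cst q0 * star (x * D))))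
    have c6 := c1.symm.trans c3
    have c7 : (2 * (x * (Q * cst q0)).re) • (D * star e) - (2 * (x * (D * star e)).re) • (Q * cst q0) =
        star (cst q0 * x) * (star Q * (D * star e)) - N • (Q' * cst q0 * star (x * D)) := by
      rw [sub_eq_iff_eq_add] at c6
      rw [c6]; abel
    rw [c7]
    exact c5
  obtain ⟨x, hx⟩ := exists_tr (not_rd_mul_cst hN hred hq0)
  rw [← dvd_two] at hx
  obtain ⟨u, v, huv⟩ := (hN.coprime_iff_not_dvd.2 hx)
  have hcl := (claim x).smul v
  set a := 2 * (x * (Q * cst q0)).re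
  set b := 2 * (x * (D * star e)).re
  obtain ⟨α, β, r, hr⟩ := lin_rem hm h2 (v * b)
  have hlam : RD N (D * star e - (C α * X + C β) • (Q * cst q0)) := by
    have e1 : D * star e - (C α * X + C β) • (Q * cst q0) =
        v • (a • (D * star e) - b • (Q * cst q0)) + N • (u • (D * star e) + r • (Q * cst q0)) := by
      have e2 : D * star e = (u * N + v * a) • (D * star e) := by rw [huv, one_smul]
      have e3 : C α * X + C β = v * b - N * r := by rw [← hr]; ring
      rw [e3]
      conv_lhs => rw [e2]
      module
    rw [e1]
    exact hcl.add ⟨_, rfl⟩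
  have hQe : RD N ((X : ℝ[X]) • Q - Q * cst (star p)) := by
    have e1 : (X : ℝ[X]) • Q - Q * cst (star p) = N • Q' := by
      rw [← he, ← mul_star_smul, ← hQ, hedef, star_sub, star_tX, ← cst_star, mul_sub, tX,
        Quaternion.mul_coe_eq_smul]
    exact ⟨_, e1⟩
  let w : Hq := α • star p + β • 1
  have hw : cst w = C α • cst (star p) + C β • 1 := by
    rw [cst_add, cst_smul, cst_smul, cst_one]
  have hsw : star w = α • p + β • 1 := by simp [w, star_add]
  have hqp : q0 * p = star p * q0 := by
    have e1 : p = ((2 * p.re : ℝ) : Hq) - star p := by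
      rw [eq_sub_iff_add_eq, Quaternion.self_add_star']
    have e2 : star p = ((2 * p.re : ℝ) : Hq) - p := by
      rw [eq_sub_iff_add_eq, Quaternion.star_add_self']
    rw [e2, sub_mul, hc, Quaternion.coe_commutes, ← mul_sub, ← e1]
  have hqw : q0 * star w = w * q0 := by
    rw [hsw]
    simp only [w, mul_add, add_mul, mul_smul_comm, smul_mul_assoc, hqp, mul_one, one_mul]
  have hpw : p * w = w * p := by
    simp only [w, mul_add, add_mul, mul_smul_comm, smul_mul_assoc, mul_one, one_mul,
      Quaternion.self_mul_star, Quaternion.star_mul_self]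
  have hL : LinE e (cst ((-k⁻¹) • (w * q0))) := by
    apply linE_of
    · rw [Quaternion.star_smul, star_mul, hs, neg_mul, hqw]
      simp
    · rw [mul_smul_comm, smul_mul_assoc, ← mul_assoc, hpw, mul_assoc, hc, mul_assoc]
  refine ⟨_, hL, ?_⟩
  have e5 : D * star e + C k • (Q * cst ((-k⁻¹) • (w * q0))) =
      (D * star e - (C α * X + C β) • (Q * cst q0)) +
      C α • (((X : ℝ[X]) • Q - Q * cst (star p)) * cst q0) := by
    have e6 : C k • (Q * cst ((-k⁻¹) • (w * q0))) = - (Q * cst w * cst q0) := by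
      rw [cst_smul, mul_smul_comm, smul_smul, ← C_mul, mul_neg, mul_inv_cancel₀ hk, cst_mul, ← mul_assoc]
      simp
    rw [e6, hw]
    simp only [mul_add, add_mul, sub_mul, mul_smul_comm, smul_mul_assoc, mul_one, smul_sub, add_smul, mul_smul]
    abel
  rw [e5]
  exact hlam.add ((hQe.mul_right _).smul _)

theorem step_unit {c : ℝ[X]} {Q D : HP} (hG : Good c Q D) (hc : IsUnit c) (hQ : ¬ IsUnit (normSq Q)) :
    Step c Q D := by
  obtain ⟨N, hm, hN, hd⟩ := exists_monic_irreducible_factor (normSq Q) hQ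
  have h2 := irr_deg hN hd (hG.qred N hN)
  obtain ⟨p, he, hp⟩ := existsE hm h2 (hG.qred N hN) hd
  obtain ⟨Q', hQ'⟩ := (div_right hm.ne_zero he).1 hp
  obtain ⟨k, hk, rfl⟩ := Polynomial.isUnit_iff.1 hc
  obtain ⟨d, hl, D', hD'⟩ := find_d hm hN h2 he hQ' (hG.qred N hN) hG.mot k hk.ne_zero
  refine step_of_div hG hl he h2 hQ' (D' := D') ?_ ?_
  · apply smul_cancel hm.ne_zero
    obtain ⟨-, -, -, -, -, hed⟩ := hl
    set e : HP := tX - cst p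
    have e1 : e * d * e = N • d := by rw [hed, mul_smul_star, he]
    rw [smul_sub, ← smul_mul_assoc, ← hD', add_mul, mul_smul_star, he, hQ', smul_mul_assoc, mul_assoc Q',
      mul_assoc Q', e1, smul_mul_assoc, mul_smul_comm, smul_comm N]
    abel
  · intro f hf _ _
    exact (hc.mul (isUnit_of_dvd_unit hf hc)).dvd

theorem prep {c N : ℝ[X]} (hm : N.Monic) (hN : Irreducible N) {Q D : HP} (hG : Good c Q D) (hC : Cond c Q D)
    (hNc : N ∣ c) : ∃ p D1, normSq (tX - cst p) = N ∧ D = D1 * (tX - cst p) := by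
  have h2 := hG.cdeg N hN hNc
  have h3 : c * 1 ∣ normSq D := hC 1 (one_dvd _) ⟨_, (one_smul _ _).symm⟩ ⟨_, (one_smul _ _).symm⟩
  rw [mul_one] at h3
  obtain ⟨p, he, hp⟩ := existsE hm h2 (hG.rd N hN hNc) (hNc.trans h3)
  obtain ⟨D1, hD1⟩ := (div_right hm.ne_zero he).1 hp
  exact ⟨p, D1, he, hD1⟩

theorem caseI {c N : ℝ[X]} (hm : N.Monic) (hN : Irreducible N) {Q D : HP} (hG : Good c Q D) (hC : Cond c Q D)
    (hNc : N ∣ c) (hn : ¬ RD N (D * star Q)) : Step c Q D := by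
  have h2 := hG.cdeg N hN hNc
  obtain ⟨p, D1, he, hD⟩ := prep hm hN hG hC hNc
  have hl := linE_zero p
  set e : HP := tX - cst p
  obtain ⟨c', rfl⟩ := hNc
  have hN0 := hm.ne_zero
  have hc'0 : c' ≠ 0 := right_ne_zero_of_mul hG.c0
  have hQ'D : D1 * star (Q * star e) = D * star Q := by
    rw [star_mul, star_star, ← mul_assoc, ← hD]
  have hDeg : normSq (Q * star e) = normSq Q * N := by
    rw [map_mul, Quaternion.normSq_star, he]
  refine ⟨c', Q * star e, D1, e, 0, hl, ?_, ?_, ⟨hc'0, ?_, ?_, ?_, ?_⟩, ?_, ?_⟩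
  · rw [smul_mul_assoc, mul_smul_star, he, smul_smul, mul_comm]
  · rw [mul_zero, sub_zero, hD]
  · exact fun f hf h => hG.cdeg f hf (h.mul_left _)
  · intro f hf h
    have h3 := h.mul_right e
    rw [mul_smul_star, he] at h3
    rcases RD.prime hf h3 with h4 | h4
    · have h5 : N ∣ f := hf.dvd_symm hN h4
      obtain ⟨Q1, hQ1⟩ := (div_right hN0 he).1 (h.of_dvd h5)
      apply hn
      rw [hD, hQ1, star_mul, mul_assoc, smul_star_mul, he, mul_smul_comm]
      exact ⟨_, rfl⟩
    · exact hG.qred f hf h4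
  · intro f hf hd h
    apply hG.rd f hf (hd.mul_left _)
    rw [hD]; exact h.mul_right _
  · rw [star_mul, star_star, mul_assoc, re_comm, mul_assoc, ← hD]
    exact hG.mot
  · intro f hf h3 h4
    rw [hQ'D] at h4
    have hNf : ¬ N ∣ f := fun h => hn (h4.of_dvd h)
    have hco : IsCoprime f N := (hN.coprime_iff_not_dvd.2 hNf).symm
    have h5 : RD f (star Q * D) := by
      apply RD.coprime hco
      have h6 := (h3.mul_left (star e)).mul_right e
      have h7 : star e * (star (Q * star e) * D1) * e = N • (star Q * D) := by
        rw [star_mul, star_star, mul_assoc, mul_assoc, mul_assoc, ← hD, star_mul_smul, he]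
      rwa [h7] at h6
    have h8 := hC f (hf.mul_left _) h5 h4
    rw [hD, map_mul, he, mul_assoc, mul_comm _ N] at h8
    exact (mul_dvd_mul_iff_left hN0).1 h8
  · rw [hDeg, natDegree_mul hN0 hc'0, natDegree_mul (normSq_ne hG.qred) hN0, h2]
    omega

theorem split_pow {N f : ℝ[X]} (hN : Irreducible N) (hf : f ≠ 0) :
    ∃ j f0, f = N ^ j * f0 ∧ ¬ N ∣ f0 := by
  have h : FiniteMultiplicity N f := FiniteMultiplicity.of_not_isUnit hN.not_isUnit hf
  obtain ⟨f0, h1, h2⟩ := h.exists_eq_pow_mul_and_not_dvd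
  exact ⟨_, f0, h1, h2⟩

theorem normSq_add_smul (D B : HP) (c : ℝ[X]) :
    normSq (D + c • B) = normSq D + 2 * c * (D * star B).re + c * c * normSq B := by
  simp only [Quaternion.normSq_def', Quaternion.re_add, Quaternion.imI_add, Quaternion.imJ_add,
    Quaternion.imK_add, Quaternion.re_smul, Quaternion.imI_smul, Quaternion.imJ_smul,
    Quaternion.imK_smul, smul_eq_mul, Quaternion.re_mul, Quaternion.re_star, Quaternion.imI_star,
    Quaternion.imJ_star, Quaternion.imK_star]
  ring

set_option maxHeartbeats 400000 in
theorem caseII {c1 N : ℝ[X]} (hm : N.Monic) (hN : Irreducible N) {Q D Q' D1 D' e d : HP}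
    (hG : Good (N * c1) Q D) (hC : Cond (N * c1) Q D) (hl : LinE e d) (he : normSq e = N)
    (hD : D = D1 * e) (hQ : Q = Q' * e) {m : ℕ} (hNm : N ^ m ∣ N * c1)
    (hm1 : RD (N ^ m) (star Q * D)) (hm2 : RD (N ^ m) (D * star Q))
    (hD' : D' = D1 + c1 • (Q' * d * star e)) (hn : ¬ RD (N ^ m) (D' * star Q'))
    (ht : N ^ m ∣ (star Q * D1 * d).re) : Step (N * c1) Q D := by
  have h2 := hG.cdeg N hN (dvd_mul_right _ _)
  have hN0 := hm.ne_zero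
  have hDe : D' * e = D + (N * c1) • (Q' * d) := by
    rw [hD', add_mul, ← hD, smul_mul_assoc, mul_smul_star, he, smul_smul, mul_comm c1]
  have hDD : D = D' * e - ((N * c1) • Q') * d := by
    rw [hDe, smul_mul_assoc]; abel
  refine step_of_div hG hl he h2 hQ hDD ?_
  intro f hf h3 h4
  have hf0 : f ≠ 0 := fun h => hG.c0 (by rw [h] at hf; exact zero_dvd_iff.1 hf)
  obtain ⟨j, f0, rfl, hnf⟩ := split_pow hN hf0
  have hj : j + 1 ≤ m := by
    by_contra hc
    apply hn
    exact h4.of_dvd ((pow_dvd_pow N (by omega)).mul_right _)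
  have hco : IsCoprime N f0 := hN.coprime_iff_not_dvd.2 hnf
  have hcom : IsCoprime (N ^ m) f0 := hco.pow_left
  have hfc : f0 ∣ N * c1 := (dvd_mul_left _ _).trans hf
  have g1 : RD f0 (star Q * D) := by
    rw [hDD, mul_sub, hQ, star_mul, smul_mul_assoc, mul_smul_comm]
    refine RD.sub ?_ (rd_smul_of_dvd hfc _)
    have : star e * star Q' * (D' * e) = star e * (star Q' * D') * e := by simp only [mul_assoc]
    rw [this]
    exact ((h3.of_dvd (dvd_mul_left _ _)).mul_left _).mul_right _
  have g2 : RD f0 (D * star Q) := by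
    rw [hDD, sub_mul, smul_mul_assoc, smul_mul_assoc]
    refine RD.sub ?_ (rd_smul_of_dvd hfc _)
    rw [hQ, star_mul, mul_assoc, smul_star_mul, mul_smul_comm]
    exact (h4.of_dvd (dvd_mul_left _ _)).smul _
  have hFc : N ^ m * f0 ∣ N * c1 := hcom.mul_dvd hNm hfc
  have hF := hC (N ^ m * f0) hFc (hm1.mul_coprime hcom g1) (hm2.mul_coprime hcom g2)
  have hre : (D * star (Q' * d)).re = - (star Q * D1 * d).re := by
    obtain ⟨-, -, -, -, hs, hed⟩ := hl
    have r1 : (D * star (Q' * d)).re = - (star Q' * (D1 * (e * d))).re := by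
      rw [star_mul, hs, neg_mul, mul_neg, Quaternion.re_neg, ← mul_assoc, re_comm, hD, mul_assoc]
    rw [r1, hed, ← mul_assoc, ← mul_assoc, re_comm, ← mul_assoc, ← mul_assoc, ← star_mul, ← hQ]
  have hre2 : N ^ m * f0 ∣ (D * star (Q' * d)).re := by
    rw [hre, dvd_neg]
    refine hcom.mul_dvd ht ?_
    have : RD f0 (star Q * D1) := by
      apply RD.coprime hco.symm
      rw [← he, ← mul_star_smul, mul_assoc _ D1, ← hD]
      exact g1.mul_right _
    exact (this.mul_right d).re
  have hns : N * normSq D' = normSq D + 2 * (N * c1) * (D * star (Q' * d)).re +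
      (N * c1) * (N * c1) * normSq (Q' * d) := by
    rw [← normSq_add_smul, ← hDe, map_mul, he, mul_comm]
  have hsub : N * c1 * (N ^ (j + 1) * f0) ∣ N * c1 * (N ^ m * f0) :=
    mul_dvd_mul_left _ (mul_dvd_mul_right (pow_dvd_pow N hj) _)
  have hfin : N * c1 * (N ^ (j + 1) * f0) ∣ N * normSq D' := by
    refine hsub.trans ?_
    rw [hns]
    refine dvd_add (dvd_add hF ?_) ?_
    · exact (mul_dvd_mul_left (N * c1) hre2).trans ⟨2, by ring⟩
    · exact (mul_dvd_mul_left _ hFc).mul_right _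
  have e1 : N * c1 * (N ^ (j + 1) * f0) = N * (N * c1 * (N ^ j * f0)) := by ring
  rw [e1] at hfin
  exact (mul_dvd_mul_iff_left hN0).1 hfin

theorem prep2 {c N : ℝ[X]} (hm : N.Monic) (hN : Irreducible N) {Q D : HP} (hG : Good c Q D) (hC : Cond c Q D)
    (hNc : N ∣ c) (hm2 : RD N (D * star Q)) :
    ∃ p D1 Q', normSq (tX - cst p) = N ∧ D = D1 * (tX - cst p) ∧ Q = Q' * (tX - cst p) := by
  obtain ⟨p, D1, he, hD⟩ := prep hm hN hG hC hNc
  refine ⟨p, D1, ?_⟩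
  rw [hD] at hm2
  rcases rank_one hN (by rw [he]) hm2 with h | h
  · rw [← hD] at h
    exact absurd h (hG.rd N hN hNc)
  · have h1 : RD N (Q * star (tX - cst p)) := by
      rw [← rd_star_iff, star_mul, star_star]; exact h
    obtain ⟨Q', hQ'⟩ := (div_right hm.ne_zero he).1 h1
    exact ⟨Q', he, hD, hQ'⟩

theorem caseIIa {c N : ℝ[X]} (hm : N.Monic) (hN : Irreducible N) {Q D : HP} (hG : Good c Q D) (hC : Cond c Q D)
    {m : ℕ} (h1m : 1 ≤ m) (hNm : N ^ m ∣ c) (hm1 : RD (N ^ m) (star Q * D)) (hm2 : RD (N ^ m) (D * star Q))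
    (hn : ¬ RD (N ^ (m + 1)) (D * star Q)) : Step c Q D := by
  have hNN : N ∣ N ^ m := dvd_pow_self N (by omega)
  obtain ⟨p, D1, Q', he, hD, hQ⟩ := prep2 hm hN hG hC (hNN.trans hNm) (hm2.of_dvd hNN)
  have hl := linE_zero p
  set e : HP := tX - cst p
  obtain ⟨c1, rfl⟩ := hNN.trans hNm
  refine caseII hm hN hG hC hl he hD hQ hNm hm1 hm2 rfl ?_ ?_
  · intro h
    apply hn
    rw [mul_zero, zero_mul, smul_zero, add_zero] at h
    rw [pow_succ', hD, hQ, star_mul, mul_assoc, smul_star_mul, he, mul_smul_comm, rd_mul_smul hm.ne_zero]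
    exact h
  · rw [mul_zero]; simp

set_option maxHeartbeats 400000 in
theorem caseIIb {c N : ℝ[X]} (hm : N.Monic) (hN : Irreducible N) {Q D : HP} (hG : Good c Q D) (hC : Cond c Q D)
    {m : ℕ} (h1m : 1 ≤ m) (hNm : N ^ m ∣ c) (hm1 : RD (N ^ (m + 1)) (star Q * D))
    (hm2 : RD (N ^ (m + 1)) (D * star Q)) (hn : ¬ N ^ (m + 1) ∣ c) : Step c Q D := by
  have hNN : N ∣ N ^ m := dvd_pow_self N (by omega)
  have hN0 := hm.ne_zero
  have hmm : N ^ m ∣ N ^ (m + 1) := pow_dvd_pow N (by omega)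
  obtain ⟨p, D1, Q', he, hD, hQ⟩ := prep2 hm hN hG hC (hNN.trans hNm) (hm2.of_dvd (hNN.trans hmm))
  obtain ⟨q0, hq0, hs, hc⟩ := perp p
  have hl := linE_of hs hc
  obtain ⟨-, -, -, -, hds, hed⟩ := id hl
  set e : HP := tX - cst p
  obtain ⟨c2, hc2⟩ := hNm
  have hNc2 : ¬ N ∣ c2 := by
    rintro ⟨r, rfl⟩
    exact hn ⟨r, by rw [hc2]; ring⟩
  have hNm' : N ^ m ∣ c := ⟨c2, hc2⟩
  obtain ⟨c1, rfl⟩ := hNN.trans hNm'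
  refine caseII hm hN hG hC hl he hD hQ hNm' (hm1.of_dvd hmm) (hm2.of_dvd hmm) rfl ?_ ?_
  · intro h
    set D' := D1 + c1 • (Q' * cst q0 * star e) with hD'
    have h1 : N • (D' * star Q') = D * star Q + (N * c1) • (Q' * (e * (cst q0 * star Q'))) := by
      have h0 : Q' * (e * (cst q0 * star Q')) = Q' * cst q0 * star e * star Q' := by
        rw [← mul_assoc e, hed]
        simp only [mul_assoc]
      have h00 : D * star Q = N • (D1 * star Q') := by
        rw [hD, hQ, star_mul, mul_assoc, smul_star_mul, he, mul_smul_comm]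
      rw [h0, h00, hD', add_mul, smul_add, smul_mul_assoc, smul_smul]
    have h3 : RD (N ^ (m + 1)) (N • (D' * star Q')) := by
      rw [pow_succ', rd_mul_smul hN0]; exact h
    rw [h1] at h3
    have h4 := h3.sub hm2
    rw [add_sub_cancel_left, hc2, pow_succ, mul_smul, rd_mul_smul (pow_ne_zero _ hN0)] at h4
    rcases RD.prime hN h4 with h5 | h5
    · exact hNc2 h5
    · rw [← mul_assoc] at h5
      rcases rank_one hN (by rw [he]) h5 with h6 | h6
      · rw [← hQ] at h6
        exact hG.qred N hN h6
      · rw [← mul_assoc, hed, mul_assoc, ← star_mul, ← hQ] at h6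
        have h7 := h6.mul_left (star (cst q0))
        rw [star_mul_smul] at h7
        rcases RD.prime hN h7 with h8 | h8
        · exact hN.not_isUnit (isUnit_of_dvd_unit h8 (isUnit_normSq_cst hq0))
        · exact hG.qred N hN (rd_star_iff.1 h8)
  · have h1 : RD (N ^ m) (star Q * D1) := by
      have h2 := hm1.mul_right (star e)
      rw [hD, ← mul_assoc, mul_star_smul, he, pow_succ', rd_mul_smul hN0] at h2
      exact h2
    exact (h1.mul_right _).re

theorem step_nonunit {c : ℝ[X]} {Q D : HP} (hG : Good c Q D) (hC : Cond c Q D) (hc : ¬ IsUnit c) :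
    Step c Q D ∨ Step c (star Q) (star D) := by
  obtain ⟨N, hm, hN, hd⟩ := exists_monic_irreducible_factor c hc
  have sw1 : star D * star (star Q) = star (star Q * D) := by rw [star_mul]
  have sw2 : star (star Q) * star D = star (D * star Q) := by rw [star_mul]
  by_cases h1 : RD N (D * star Q)
  swap
  · exact Or.inl (caseI hm hN hG hC hd h1)
  by_cases h2 : RD N (star Q * D)
  swap
  · refine Or.inr (caseI hm hN hG.star hC.star hd ?_)
    rwa [sw1, rd_star_iff]
  have hex : ∃ m, 1 ≤ m ∧ (N ^ m ∣ c ∧ RD (N ^ m) (star Q * D) ∧ RD (N ^ m) (D * star Q)) ∧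
      ¬ (N ^ (m + 1) ∣ c ∧ RD (N ^ (m + 1)) (star Q * D) ∧ RD (N ^ (m + 1)) (D * star Q)) := by
    by_contra! hno
    have hall : ∀ m, 1 ≤ m → (N ^ m ∣ c ∧ RD (N ^ m) (star Q * D) ∧ RD (N ^ m) (D * star Q)) := by
      intro m hm1
      induction m, hm1 using Nat.le_induction with
      | base => simpa using ⟨hd, h2, h1⟩
      | succ n hn ih => 
        exact hno n hn ih
    have h3 := (hall (c.natDegree + 1) (by omega)).1
    have h4 := natDegree_le_of_dvd h3 hG.c0
    rw [hm.natDegree_pow, hG.cdeg N hN hd] at h4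
    omega
  obtain ⟨m, h1m, ⟨a1, a2, a3⟩, a4⟩ := hex
  by_cases b3 : RD (N ^ (m + 1)) (D * star Q)
  swap
  · exact Or.inl (caseIIa hm hN hG hC h1m a1 a2 a3 b3)
  by_cases b2 : RD (N ^ (m + 1)) (star Q * D)
  swap
  · refine Or.inr (caseIIa hm hN hG.star hC.star h1m a1 ?_ ?_ ?_)
    · rwa [sw2, rd_star_iff]
    · rwa [sw1, rd_star_iff]
    · rwa [sw1, rd_star_iff]
  exact Or.inl (caseIIb hm hN hG hC h1m a1 b2 b3 (fun h => a4 ⟨h, b2, b3⟩))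

theorem suff : ∀ (n : ℕ) (c : ℝ[X]) (Q D : HP), 2 * c.natDegree + (normSq Q).natDegree < n →
    Good c Q D → Cond c Q D → Mon (c • Q) D → Fac (c • Q) D := by
  intro n
  induction n with
  | zero => intro c Q D h; omega
  | succ n ih =>
    intro c Q D hlt hG hC hM
    have hstep : ∀ {Q D : HP}, Step c Q D → 2 * c.natDegree + (normSq Q).natDegree < n + 1 →
        Mon (c • Q) D → Fac (c • Q) D := by
      rintro Q D ⟨c', Q', D', e, d, hl, h1, h2, h3, h4, h5⟩ hlt hM
      rw [h1, h2] at hM ⊢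
      exact Fac.step hl (ih c' Q' D' (by omega) h3 h4 (Mon.of_step hl hM))
    by_cases hc : IsUnit c
    · by_cases hQ : IsUnit (normSq Q)
      · have hu : IsUnit (c • Q) := by
          obtain ⟨k, hk⟩ := (hc.mul hQ).exists_right_inv
          refine ⟨⟨c • Q, k • star Q, ?_, ?_⟩, rfl⟩
          · rw [smul_mul_smul_comm, Quaternion.self_mul_star, ← Quaternion.coe_smul, smul_eq_mul,
              mul_right_comm, hk]; simp
          · rw [smul_mul_smul_comm, Quaternion.star_mul_self, ← Quaternion.coe_smul, smul_eq_mul,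
              mul_comm k, mul_right_comm, hk]; simp
        obtain ⟨e1, e2⟩ := hM.unit hu
        rw [e1, e2]
        exact Fac.one
      · exact hstep (step_unit hG hc hQ) hlt hM
    · rcases step_nonunit hG hC hc with h | h
      · exact hstep h hlt hM
      · have hM' := hM.star
        rw [Quaternion.star_smul] at hM'
        have := hstep h (by rw [Quaternion.normSq_star]; exact hlt) hM'
        have := this.star
        rwa [Quaternion.star_smul, star_star, star_star] at this

theorem irr_lin {P : HP} {p : Hq} (h : ∀ a : ℝ, ¬ RD (X - C a) (P * (tX - cst p))) :
    Irreducible (normSq (tX - cst p)) := by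
  rw [normSq_lin]
  set b := p.imI ^ 2 + p.imJ ^ 2 + p.imK ^ 2 with hb
  have hb0 : 0 < b := by
    by_contra hb0
    have h1 : p.imI = 0 := by nlinarith [sq_nonneg p.imI, sq_nonneg p.imJ, sq_nonneg p.imK]
    have h2 : p.imJ = 0 := by nlinarith [sq_nonneg p.imI, sq_nonneg p.imJ, sq_nonneg p.imK]
    have h3 : p.imK = 0 := by nlinarith [sq_nonneg p.imI, sq_nonneg p.imJ, sq_nonneg p.imK]
    apply h p.re
    have h4 : (tX - cst p : HP) = ((X - C p.re : ℝ[X]) : HP) := by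
      ext1 <;> simp [tX, h1, h2, h3]
    rw [h4, Quaternion.mul_coe_eq_smul]
    exact ⟨_, rfl⟩
  have hd : ((X - C p.re) ^ 2 : ℝ[X]).natDegree = 2 := by
    rw [natDegree_pow, natDegree_X_sub_C]
  have hm : ((X - C p.re) ^ 2 : ℝ[X]).Monic := (monic_X_sub_C _).pow 2
  have hd2 : ((X - C p.re) ^ 2 + C b : ℝ[X]).natDegree = 2 := by
    rw [natDegree_add_C, hd]
  have hm2 : ((X - C p.re) ^ 2 + C b : ℝ[X]).Monic := by
    apply hm.add_of_left
    rw [degree_eq_natDegree hm.ne_zero, hd]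
    exact lt_of_le_of_lt degree_C_le (by norm_num)
  rw [hm2.irreducible_iff_roots_eq_zero_of_degree_le_three (by omega) (by omega)]
  rw [Multiset.eq_zero_iff_forall_notMem]
  intro x hx
  have := isRoot_of_mem_roots hx
  rw [IsRoot.def] at this
  simp at this
  nlinarith [sq_nonneg (x - p.re)]

theorem necA {c N : ℝ[X]} (hN : Irreducible N) {Q D Q' D' e d : HP} (c0 : c ≠ 0)
    (qred : ¬ RD N Q) (hl : LinE e d) (he : normSq e = N) (hQ : Q = Q' * e)
    (hD : D = D' * e - (c • Q') * d) (hC : Cond c Q' D') : Cond c Q D := by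
  intro f hf h1 h2
  have hN0 := hN.ne_zero
  obtain ⟨-, -, -, -, hs, hed⟩ := id hl
  have hf0 : f ≠ 0 := fun h => c0 (by rw [h] at hf; exact zero_dvd_iff.1 hf)
  have k1 : RD f (star e * (star Q' * D') * e) := by
    have e1 : star e * (star Q' * D') * e = star Q * D + c • (star Q * (Q' * d)) := by
      rw [hD, mul_sub, hQ, star_mul, smul_mul_assoc, mul_smul_comm, sub_add_cancel]
      simp only [mul_assoc]
    rw [e1]
    exact h1.add (rd_smul_of_dvd hf _)
  have k2 : RD f (N • (D' * star Q')) := by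
    have e1 : N • (D' * star Q') = D * star Q + c • (Q' * d * star Q) := by
      rw [hD, sub_mul, smul_mul_assoc, smul_mul_assoc, sub_add_cancel, hQ, star_mul, mul_assoc, smul_star_mul,
        he, mul_smul_comm]
    rw [e1]
    exact h2.add (rd_smul_of_dvd hf _)
  have k3 : RD f (star Q' * (N • (D' * star Q'))) := k2.mul_left _
  rw [mul_smul_comm, ← mul_assoc] at k3
  set Z := star Q' * D' with hZ
  obtain ⟨j, f0, rfl, hnf⟩ := split_pow hN hf0
  have hco : IsCoprime N f0 := hN.coprime_iff_not_dvd.2 hnf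
  have hdf0 : f0 ∣ N ^ j * f0 := dvd_mul_left _ _
  have hdN : N ^ j ∣ N ^ j * f0 := dvd_mul_right _ _
  have z0 : RD f0 Z := by
    have e1 := ((k1.of_dvd hdf0).mul_left e).mul_right (star e)
    have e2 : e * (star e * Z * e) * star e = N • (N • Z) := by
      rw [mul_assoc (star e), smul_star_mul, smul_mul_assoc, mul_star_smul, he]
    rw [e2] at e1
    exact RD.coprime hco.symm (RD.coprime hco.symm e1)
  have y0 : RD f0 (D' * star Q') := RD.coprime hco.symm (k2.of_dvd hdf0)
  have hre : ((D' * e) * star (-(Q' * d))).re = (star e * Z * d).re := by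
    have r1 : (D' * e) * star (-(Q' * d)) = D' * (e * d) * star Q' := by
      rw [star_neg, star_mul, hs, neg_mul, neg_neg]; simp only [mul_assoc]
    have r2 : D' * (e * d) * star Q' = (D' * d) * (star e * star Q') := by
      rw [hed]; simp only [mul_assoc]
    have r3 : star e * star Q' * (D' * d) = star e * Z * d := by
      rw [hZ]; simp only [mul_assoc]
    rw [r1, r2, re_comm, r3]
  have hns : normSq D = normSq D' * N + 2 * c * (star e * Z * d).re + c * c * normSq (-(Q' * d)) := by
    rw [← hre, ← he, ← map_mul, ← normSq_add_smul, hD, smul_mul_assoc, smul_neg, sub_eq_add_neg]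
  have claim : c * (N ^ j * f0) ∣ normSq D' * N ∧ N ^ j * f0 ∣ (star e * Z * d).re := by
    rcases j with _ | i
    · rw [pow_zero, one_mul] at *
      exact ⟨(hC f0 hf z0 y0).mul_right _, ((z0.mul_left _).mul_right _).re⟩
    · have m1 : RD (N ^ (i + 1)) (star e * Z * e) := k1.of_dvd hdN
      have m2 : RD (N ^ i) (D' * star Q') := by
        have := k2.of_dvd hdN
        rwa [pow_succ', rd_mul_smul hN0] at this
      have m3 : RD (N ^ i) (Z * star Q') := by
        have := k3.of_dvd hdN
        rwa [pow_succ', rd_mul_smul hN0] at this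
      have m4 : ∀ l, l ≤ i → RD (N ^ l) Z := by
        intro l
        induction l with
        | zero => intro _; exact ⟨Z, by rw [pow_zero, one_smul]⟩
        | succ l ih =>
          intro hli
          obtain ⟨W, hW⟩ := ih (by omega)
          rw [hW] at m1 m3
          rw [mul_smul_comm, smul_mul_assoc] at m1
          rw [smul_mul_assoc] at m3
          have n1 : RD (N * N) (star e * W * e) := by
            rw [← rd_mul_smul (pow_ne_zero l hN0)]
            refine m1.of_dvd ?_
            rw [← pow_two, ← pow_add]
            exact pow_dvd_pow _ (by omega)
          have n2 : RD N (W * e) := by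
            have := n1.mul_left e
            rwa [mul_assoc (star e), smul_star_mul, he, rd_mul_smul hN0] at this
          have n3 : RD N (W * star Q') := by
            rw [← rd_mul_smul (pow_ne_zero l hN0)]
            refine m3.of_dvd ?_
            rw [← pow_succ]
            exact pow_dvd_pow _ (by omega)
          have he' : normSq (star e) = N := by rw [Quaternion.normSq_star, he]
          obtain ⟨W2, hW2⟩ := (div_right hN0 he' (A := W)).1 (by rw [star_star]; exact n2)
          rw [hW2] at n3
          rw [hW, pow_succ, rd_mul_smul (pow_ne_zero l hN0)]
          rcases rank_one hN (by rw [he']) n3 with n4 | n4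
          · rwa [hW2]
          · rw [← star_mul, ← hQ, rd_star_iff] at n4
            exact absurd n4 qred
      have m5 := m4 i le_rfl
      have hcoi : IsCoprime (N ^ i) f0 := hco.pow_left
      have m6 := hC (N ^ i * f0) (((mul_dvd_mul_right (pow_dvd_pow N (by omega)) f0)).trans hf)
        (m5.mul_coprime hcoi z0) (m2.mul_coprime hcoi y0)
      constructor
      · have := mul_dvd_mul_right m6 N
        exact (show c * (N ^ (i + 1) * f0) = c * (N ^ i * f0) * N by ring) ▸ this
      · refine hco.pow_left.mul_dvd ?_ ((z0.mul_left _).mul_right _).re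
        obtain ⟨W, hW⟩ := m5
        rw [hW, mul_smul_comm, smul_mul_assoc, pow_succ, rd_mul_smul (pow_ne_zero i hN0)] at m1
        rw [hW, mul_smul_comm, smul_mul_assoc, Quaternion.re_smul, smul_eq_mul, pow_succ]
        refine mul_dvd_mul_left _ ?_
        have n1 := m1.mul_right d
        have n2 : star e * W * e * d = star e * (W * d) * star e := by
          rw [mul_assoc _ e, hed]; simp only [mul_assoc]
        rw [n2, K1, Quaternion.normSq_star, he] at n1
        have n3 := n1.add (⟨star (W * d), rfl⟩ : RD N (N • star (W * d)))
        rw [sub_add_cancel] at n3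
        rcases RD.prime hN n3 with n4 | n4
        · rw [dvd_two, re_comm, ← mul_assoc] at n4
          exact n4
        · exfalso
          apply qred
          rw [hQ]
          exact (rd_star_iff.1 n4).mul_left _
  rw [hns]
  refine dvd_add (dvd_add claim.1 ?_) ?_
  · exact (mul_dvd_mul_left c claim.2).trans ⟨2, by ring⟩
  · exact (mul_dvd_mul_left _ hf).mul_right _

theorem necB {c' N : ℝ[X]} (hN : Irreducible N) {Q D D' e d : HP}
    (hQ : ¬ RD N (Q * star e)) (hrd : ¬ RD N D) (hl : LinE e d) (he : normSq e = N)
    (hD : D = D' * e - (c' • (Q * star e)) * d) (hC : Cond c' (Q * star e) D') : Cond (N * c') Q D := by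
  intro f hf h1 h2
  have hN0 := hN.ne_zero
  obtain ⟨-, -, -, -, hs, hed⟩ := id hl
  have hde : star e * d = d * e := by
    obtain ⟨-, -, -, -, -, h⟩ := hl.star
    rw [hs, star_star, mul_neg, neg_mul, neg_inj] at h
    exact h
  set D1 := D' - c' • (Q * d) with hD1
  have hDD : D = D1 * e := by
    rw [hD, hD1, sub_mul, smul_mul_assoc, smul_mul_assoc, mul_assoc Q, hde, mul_assoc Q]
  have hNf : ¬ N ∣ f := by
    intro h
    have h3 := h2.of_dvd h
    rw [hDD] at h3
    rcases rank_one hN (by rw [he]) h3 with h4 | h4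
    · rw [← hDD] at h4
      exact hrd h4
    · apply hQ
      rw [← rd_star_iff, star_mul, star_star]
      exact h4
  have hco : IsCoprime f N := (hN.coprime_iff_not_dvd.2 hNf).symm
  have hfc : f ∣ c' := hco.dvd_of_dvd_mul_left hf
  have g1 : RD f (star Q * D1) := by
    apply RD.coprime hco
    have := h1.mul_right (star e)
    rwa [hDD, ← mul_assoc, mul_star_smul, he] at this
  have g2 : RD f (star Q * D') := by
    have e1 : star Q * D' = star Q * D1 + c' • (star Q * (Q * d)) := by
      rw [hD1, mul_sub, mul_smul_comm, sub_add_cancel]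
    rw [e1]
    exact g1.add (rd_smul_of_dvd hfc _)
  have g3 : RD f (D' * star (Q * star e)) := by
    have e1 : D' * star (Q * star e) = D * star Q + c' • (Q * star e * d * star Q) := by
      rw [hD, sub_mul, smul_mul_assoc, smul_mul_assoc, sub_add_cancel, star_mul, star_star, mul_assoc]
    rw [e1]
    exact h2.add (rd_smul_of_dvd hfc _)
  have g4 := hC f hfc (by rw [star_mul, star_star, mul_assoc]; exact g2.mul_left _) g3
  have hns : normSq D1 = normSq D' + 2 * c' * (D' * star (-(Q * d))).re + c' * c' * normSq (-(Q * d)) := by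
    rw [← normSq_add_smul, hD1, smul_neg, sub_eq_add_neg]
  have g5 : f ∣ (D' * star (-(Q * d))).re := by
    rw [re_comm, star_neg, star_mul, neg_mul, Quaternion.re_neg, dvd_neg, mul_assoc]
    exact (g2.mul_left _).re
  have g6 : c' * f ∣ normSq D1 := by
    rw [hns]
    refine dvd_add (dvd_add g4 ?_) ?_
    · exact (mul_dvd_mul_left c' g5).trans ⟨2, by ring⟩
    · exact (mul_dvd_mul_left _ hfc).mul_right _
  rw [hDD, map_mul, he, mul_comm _ N, mul_assoc]
  exact mul_dvd_mul_left _ g6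

theorem nec {P D : HP} (h : Fac P D) : ∀ (c : ℝ[X]) (Q : HP), P = c • Q → c ≠ 0 →
    (∀ f, Irreducible f → ¬ RD f Q) → (∀ f, Irreducible f → f ∣ c → ¬ RD f D) →
    (∀ a : ℝ, ¬ RD (X - C a) P) → Cond c Q D := by
  induction h with
  | one =>
    intro c Q _ _ _ _ _ f _ _ _
    rw [map_zero]
    exact dvd_zero _
  | step hl _ ih =>
    rename_i P' D' e d _
    intro c Q hP c0 qred hrd hlin
    have hN : Irreducible (normSq e) := by
      obtain ⟨p, q, rfl, -, -, -⟩ := id hl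
      exact irr_lin hlin
    generalize hNe : normSq e = N at hN
    have hN0 := hN.ne_zero
    have hlin' : ∀ a : ℝ, ¬ RD (X - C a) P' := fun a h => hlin a (h.mul_right _)
    have hPN : N • P' = c • (Q * star e) := by
      rw [← hNe, ← mul_star_smul, hP, smul_mul_assoc]
    by_cases hQe : RD N (Q * star e)
    · obtain ⟨Q', hQ'⟩ := (div_right hN0 hNe).1 hQe
      have hP' : P' = c • Q' := by
        apply smul_cancel hN0
        rw [hPN, hQ', mul_star_smul, hNe, smul_comm]
      have hD : D' * e - P' * d = D' * e - (c • Q') * d := by rw [hP']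
      refine necA hN c0 (qred N hN) hl hNe hQ' hD (ih c Q' hP' c0 ?_ ?_ hlin')
      · intro f hf h
        apply qred f hf
        rw [hQ']; exact h.mul_right _
      · intro f hf hfc h
        apply hrd f hf hfc
        rw [hD, smul_mul_assoc]
        exact (h.mul_right _).sub (rd_smul_of_dvd hfc _)
    · have hNc : N ∣ c := by
        have h1 : RD N (c • (Q * star e)) := ⟨P', hPN.symm⟩
        exact (RD.prime hN h1).resolve_right hQe
      obtain ⟨c', rfl⟩ := hNc
      have hP' : P' = c' • (Q * star e) := by
        apply smul_cancel hN0
        rw [hPN, smul_smul]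
      have hD : D' * e - P' * d = D' * e - (c' • (Q * star e)) * d := by rw [hP']
      refine necB hN hQe (hrd N hN (dvd_mul_right _ _)) hl hNe hD
        (ih c' _ hP' (right_ne_zero_of_mul c0) ?_ ?_ hlin')
      · intro f hf h
        have h3 := h.mul_right e
        rw [mul_smul_star, hNe] at h3
        rcases RD.prime hf h3 with h4 | h4
        · exact hQe (h.of_dvd (hf.dvd_symm hN h4))
        · exact qred f hf h4
      · intro f hf hfc h
        apply hrd f hf (hfc.mul_left _)
        rw [hD, smul_mul_assoc]
        exact (h.mul_right _).sub (rd_smul_of_dvd hfc _)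

theorem rd_monic_of {A : HP} (h : ∀ f : ℝ[X], f.Monic → RD f A → f = 1) :
    ∀ f : ℝ[X], Irreducible f → ¬ RD f A := by
  intro f hf hr
  have h1 : RD (normalize f) A := hr.of_dvd (normalize_associated f).dvd
  have h2 := h _ (monic_normalize hf.ne_zero) h1
  exact hf.not_isUnit (normalize_eq_one.1 h2)

theorem main (c : ℝ[X]) (Q D : Hq[X]) (g : ℝ[X]) (M : DHq[X])
    (hM : M = mp (qPoly c * Q) D)
    (hmonic : M.Monic) (hmotion : IsMotion M)
    (hMred : ReducedD M) (hQred : ReducedQ Q) (hbdd : BoundedD M)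
    (hg : IsMrpf3 g c (cstar Q * D) (D * cstar Q)) :
    HasLinFact M ↔ RDvdQ (c * g) (D * cstar D) := by
  subst hM
  have hpsi : psi (qPoly c * Q) = c • psi Q := by
    rw [map_mul, psi_apply (qPoly c), psi0_qPoly, Quaternion.coe_mul_eq_smul]
  obtain ⟨hm0, hm1⟩ := isMotion_mp.1 hmotion
  rw [hpsi] at hm0 hm1
  have c0 : c ≠ 0 := by
    rintro rfl
    rw [zero_smul] at hm0
    exact hm0 rfl
  have qred : ∀ f, Irreducible f → ¬ RD f (psi Q) :=
    rd_monic_of fun f hf h => hQred f hf (rdvdQ_iff.2 h)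
  have hlin : ∀ a : ℝ, ¬ RD (X - C a) (c • psi Q) := by
    intro a h
    apply hbdd a
    rw [primal_mp, rdvdQ_iff, hpsi]
    exact h
  have hrd : ∀ f, Irreducible f → f ∣ c → ¬ RD f (psi D) := by
    intro f hf hfc h
    have h1 : RD (normalize f) (psi D) := h.of_dvd (normalize_associated f).dvd
    have h2 : RD (normalize f) (psi (qPoly c * Q)) := by
      rw [hpsi]
      exact rd_smul_of_dvd ((normalize_associated f).dvd.trans hfc) _
    obtain ⟨A, hA⟩ := rdvdQ_iff.2 h1
    obtain ⟨B, hB⟩ := rdvdQ_iff.2 h2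
    have h3 := hMred _ (monic_normalize hf.ne_zero) ⟨mp B A, by
      rw [dPoly_eq, mp_mul, hA, hB, zero_mul, add_zero]⟩
    exact hf.not_isUnit (normalize_eq_one.1 h3)
  have hmot : (star (psi Q) * psi D).re = 0 := by
    rw [Quaternion.star_smul, mul_smul_comm, Quaternion.re_smul, smul_eq_mul, re_comm] at hm1
    exact (mul_eq_zero.1 hm1).resolve_left c0
  have hcdeg : ∀ f, Irreducible f → f ∣ c → f.natDegree = 2 := by
    intro f hf hfc
    have h1 := hf.natDegree_le_two
    have h2 := hf.natDegree_pos
    by_contra hne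
    have h3 : f.natDegree = 1 := by omega
    obtain ⟨a, ha⟩ := Polynomial.exists_root_of_degree_eq_one
      (Polynomial.degree_eq_iff_natDegree_eq_of_pos (by norm_num) |>.2 h3)
    exact hlin a (rd_smul_of_dvd ((dvd_iff_isRoot.2 ha).trans hfc) _)
  have hCond : Cond c (psi Q) (psi D) ↔ RDvdQ (c * g) (D * cstar D) := by
    obtain ⟨gm, g1, g2, g3, g4⟩ := hg
    rw [rdvdQ_iff, map_mul, psi_cstar] at g2 g3
    rw [rdvdQ_iff, map_mul, psi_cstar, Quaternion.self_mul_star, rd_coe]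
    constructor
    · intro h
      exact h g g1 g2 g3
    · intro h f hf h1 h2
      have hf0 : f ≠ 0 := fun h => c0 (by rw [h] at hf; exact zero_dvd_iff.1 hf)
      have hnf := (normalize_associated f).dvd
      have hfg : normalize f ∣ g := by
        apply g4 _ (monic_normalize hf0) (hnf.trans hf)
        · rw [rdvdQ_iff, map_mul, psi_cstar]
          exact h1.of_dvd hnf
        · rw [rdvdQ_iff, map_mul, psi_cstar]
          exact h2.of_dvd hnf
      exact (mul_dvd_mul_left c ((normalize_associated f).symm.dvd.trans hfg)).trans h
  rw [← hCond]
  constructor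
  · intro h
    have h1 := hasLinFact_mp h
    rw [hpsi] at h1
    exact nec h1 c (psi Q) rfl c0 qred hrd hlin
  · intro h
    have hMon : Mon (c • psi Q) (psi D) := by
      rw [Mon, ← hpsi, RingEquiv.symm_apply_apply, RingEquiv.symm_apply_apply]
      exact hmonic
    have h1 := hasLinFact_of_fac (suff _ c (psi Q) (psi D) (Nat.lt_succ_self _)
      ⟨c0, hcdeg, qred, hrd, hmot⟩ h hMon)
    rw [← hpsi, RingEquiv.symm_apply_apply, RingEquiv.symm_apply_apply] at h1
    exact h1

end

end MPF

/-- Theorem 1: A bounded monic reduced motion polynomial `M = cQ + εD` with `Q` reduced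
admits a factorization into monic linear motion polynomial factors iff `c·g` divides `D·D*`,
where `g = mrpf(c, Q*D, DQ*)`. -/
theorem bounded_motion_polynomial_linear_factorization_iff
    (c : ℝ[X]) (Q D : Hq[X]) (g : ℝ[X]) (M : DHq[X])
    (hM : M = mp (qPoly c * Q) D)
    (hmonic : M.Monic) (hmotion : IsMotion M)
    (hMred : ReducedD M) (hQred : ReducedQ Q)
    (hbdd : BoundedD M)
    (hg : IsMrpf3 g c (cstar Q * D) (D * cstar Q)) :
    HasLinFact M ↔ RDvdQ (c * g) (D * cstar D) := by
  exact MPF.main c Q D g M hM hmonic hmotion hMred hQred hbdd hg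
end

section
/- Let M = P + εD ∈ 𝔻ℍ[t] (with P, D ∈ ℍ[t]) be a reduced unbounded motion polynomial. If M admits a factorization into monic linear motion polynomial factors, then P has no linear real factor of multiplicity two, i.e., there is no a ∈ ℝ with (t − a)² dividing P in ℍ[t]. -/
open Polynomial DualNumber TrivSqZeroExt

/-- Evaluation at a real number. -/
noncomputable def evR (R : Type) [Ring R] [Algebra ℝ R] (a : ℝ) : R[X] →+* R :=
  Polynomial.eval₂RingHom' (RingHom.id R) (algebraMap ℝ R a)
    (fun x => (Algebra.commutes a x).symm)

theorem evR_X {R : Type} [Ring R] [Algebra ℝ R] (a : ℝ) :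
    evR R a Polynomial.X = algebraMap ℝ R a := by
  simp [evR, Polynomial.eval₂RingHom']

theorem evR_C {R : Type} [Ring R] [Algebra ℝ R] (a : ℝ) (r : R) :
    evR R a (Polynomial.C r) = r := by
  simp [evR, Polynomial.eval₂RingHom']

theorem evR_root {R : Type} [Ring R] [Nontrivial R] [Algebra ℝ R] (a : ℝ) (p : R[X])
    (h : evR R a p = 0) :
    ∃ q, p = (Polynomial.X - Polynomial.C (algebraMap ℝ R a)) * q := by
  have hm := Polynomial.monic_X_sub_C (algebraMap ℝ R a)
  have h1 := Polynomial.modByMonic_add_div p (Polynomial.X - Polynomial.C (algebraMap ℝ R a))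
  have h2 := Polynomial.degree_modByMonic_lt p hm
  rw [Polynomial.degree_X_sub_C] at h2
  have h3 : p %ₘ (Polynomial.X - Polynomial.C (algebraMap ℝ R a)) =
      Polynomial.C ((p %ₘ (Polynomial.X - Polynomial.C (algebraMap ℝ R a))).coeff 0) := by
    apply Polynomial.eq_C_of_degree_le_zero
    exact Order.lt_succ_iff.mp h2
  rw [h3] at h1
  have h4 := congrArg (evR R a) h1
  rw [map_add, map_mul, map_sub, evR_X, evR_C, evR_C, sub_self, zero_mul, add_zero, h] at h4
  rw [h4, map_zero, zero_add] at h1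
  exact ⟨_, h1.symm⟩

theorem prod_two_zero (x v y : DHq) (hx : x.fst = 0) (hy : y.fst = 0) : x * v * y = 0 := by
  ext1 <;> simp [hx, hy]

/-- Primal product of a list. -/
noncomputable def primProd (L : List DHq) : Hq[X] :=
  (L.map fun h => (Polynomial.X - Polynomial.C h.fst : Hq[X])).prod

theorem exists_split (a : ℝ) (L : List DHq) (B : Hq[X])
    (h : primProd L = (Polynomial.X - Polynomial.C (algebraMap ℝ Hq a)) * B) :
    ∃ x ∈ L, x.fst = algebraMap ℝ Hq a := by
  have h1 := congrArg (evR Hq a) h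
  rw [primProd, map_list_prod, map_mul, map_sub, evR_X, evR_C, sub_self, zero_mul,
    List.prod_eq_zero_iff] at h1
  simp only [List.map_map, List.mem_map, Function.comp, map_sub, evR_X, evR_C] at h1
  obtain ⟨x, hx, e⟩ := h1
  exact ⟨x, hx, (sub_eq_zero.mp e).symm⟩

theorem central_q (a : ℝ) (B : Hq[X]) :
    B * (Polynomial.X - Polynomial.C (algebraMap ℝ Hq a)) =
      (Polynomial.X - Polynomial.C (algebraMap ℝ Hq a)) * B := by
  rw [mul_sub, sub_mul, Polynomial.X_mul]
  congr 1
  ext1 n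
  rw [Polynomial.coeff_mul_C, Polynomial.coeff_C_mul, Algebra.commutes]

theorem ev_two (a : ℝ) (L : List DHq) (B : Hq[X])
    (h : primProd L = (Polynomial.X - Polynomial.C (algebraMap ℝ Hq a)) ^ 2 * B) :
    (L.map fun h => algebraMap ℝ DHq a - h).prod = 0 := by
  rw [pow_two, mul_assoc] at h
  obtain ⟨x, hx, e⟩ := exists_split a L _ h
  obtain ⟨L1, L2, rfl⟩ := List.append_of_mem hx
  have h2 : primProd (L1 ++ L2) = (Polynomial.X - Polynomial.C (algebraMap ℝ Hq a)) * B := by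
    apply mul_left_cancel₀ (Polynomial.X_sub_C_ne_zero (algebraMap ℝ Hq a))
    rw [← h]
    simp only [primProd, List.map_append, List.prod_append, List.map_cons, List.prod_cons, e]
    rw [← mul_assoc, ← mul_assoc, central_q]
  obtain ⟨y, hy, e'⟩ := exists_split a _ _ h2
  have f0 : ∀ z : DHq, z.fst = algebraMap ℝ Hq a → (algebraMap ℝ DHq a - z).fst = 0 := by
    intro z hz
    rw [TrivSqZeroExt.fst_sub, hz]
    exact sub_self _
  rcases List.mem_append.1 hy with hy | hy
  · obtain ⟨U, V, rfl⟩ := List.append_of_mem hy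
    have := prod_two_zero _ (V.map fun h => algebraMap ℝ DHq a - h).prod _ (f0 y e') (f0 x e)
    simp only [List.map_append, List.prod_append, List.map_cons, List.prod_cons]
    calc _ = (U.map fun h => algebraMap ℝ DHq a - h).prod * ((algebraMap ℝ DHq a - y) *
          (V.map fun h => algebraMap ℝ DHq a - h).prod * (algebraMap ℝ DHq a - x)) *
          (L2.map fun h => algebraMap ℝ DHq a - h).prod := by simp only [mul_assoc]
      _ = 0 := by rw [this, mul_zero, zero_mul]
  · obtain ⟨U, V, rfl⟩ := List.append_of_mem hy
    have := prod_two_zero _ (U.map fun h => algebraMap ℝ DHq a - h).prod _ (f0 x e) (f0 y e')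
    simp only [List.map_append, List.prod_append, List.map_cons, List.prod_cons]
    calc _ = (L1.map fun h => algebraMap ℝ DHq a - h).prod * ((algebraMap ℝ DHq a - x) *
          (U.map fun h => algebraMap ℝ DHq a - h).prod * (algebraMap ℝ DHq a - y)) *
          (V.map fun h => algebraMap ℝ DHq a - h).prod := by simp only [mul_assoc]
      _ = 0 := by rw [this, mul_zero, zero_mul]

theorem primal_mp (P D : Hq[X]) : primal (mp P D) = P := by
  ext1 n
  simp [primal, mp, dhQ, Polynomial.coeff_map, Polynomial.coeff_C_mul]

theorem primal_prod (L : List DHq) :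
    primal (L.map fun h => (Polynomial.X - Polynomial.C h : DHq[X])).prod = primProd L := by
  have : ∀ A, primal A = Polynomial.mapRingHom (fstHom ℝ Hq Hq).toRingHom A := fun _ => rfl
  rw [this, map_list_prod, List.map_map, primProd]
  congr 1
  apply List.map_congr_left
  intro x _
  simp

/-- If a reduced unbounded motion polynomial admits a factorization into monic linear
motion polynomial factors, then its primal part has no linear real factor of
multiplicity two. -/
theorem unbounded_no_double_linear_factor
    (P D : Hq[X]) (M : DHq[X]) (hM : M = mp P D)
    (hmonic : M.Monic) (hmotion : IsMotion M) (hred : ReducedD M)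
    (hunb : ∃ a : ℝ, RDvdQ (Polynomial.X - Polynomial.C a) P)
    (hfact : HasLinFact M) :
    ∀ a : ℝ, ¬ RDvdQ ((Polynomial.X - Polynomial.C a) ^ 2) P := by
  rintro a ⟨B, hB⟩
  obtain ⟨L, -, hL⟩ := hfact
  have hP : primProd L = P := by rw [← primal_prod, ← hL, hM, primal_mp]
  have h0 := ev_two a L B (by rw [hP, hB]; simp [qPoly])
  have h1 : evR DHq a M = 0 := by
    rw [hL, map_list_prod, List.map_map, ← h0]
    congr 1
    apply List.map_congr_left
    intro x _
    simp only [Function.comp, map_sub, evR_X, evR_C]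
  obtain ⟨q, hq⟩ := evR_root a M h1
  have h2 := hred (Polynomial.X - Polynomial.C a) (Polynomial.monic_X_sub_C a) ⟨q, by
    rw [hq]
    congr 1
    simp only [dPoly, dhQ, qPoly, Polynomial.map_sub, Polynomial.map_X, Polynomial.map_C]
    rfl⟩
  have h3 := congrArg Polynomial.natDegree h2
  rw [Polynomial.natDegree_X_sub_C, Polynomial.natDegree_one] at h3
  exact one_ne_zero h3
end

section
/- (ABC-Lemma) Let N ∈ ℝ[t] be a quadratic irreducible real polynomial and let A, B, C ∈ ℍ[t] be quaternion polynomials. If N divides the product A·B·C in ℍ[t] and N divides B·B*, then N divides A·B or N divides B·C. -/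
open Polynomial DualNumber TrivSqZeroExt

def mkQ (a b c d : ℝ) : Hq := ⟨a, b, c, d⟩

@[simp] lemma mkQ_re (a b c d : ℝ) : (mkQ a b c d).re = a := rfl
@[simp] lemma mkQ_imI (a b c d : ℝ) : (mkQ a b c d).imI = b := rfl
@[simp] lemma mkQ_imJ (a b c d : ℝ) : (mkQ a b c d).imJ = c := rfl
@[simp] lemma mkQ_imK (a b c d : ℝ) : (mkQ a b c d).imK = d := rfl

noncomputable def qMat : Hq →+* Matrix (Fin 2) (Fin 2) ℂ where
  toFun q := !![⟨q.re, q.imI⟩, ⟨q.imJ, q.imK⟩; ⟨-q.imJ, q.imK⟩, ⟨q.re, -q.imI⟩]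
  map_one' := by
    ext i j; fin_cases i <;> fin_cases j <;> simp [Complex.ext_iff] <;> exact ⟨rfl, rfl⟩
  map_zero' := by
    ext i j; fin_cases i <;> fin_cases j <;> simp [Complex.ext_iff] <;> exact ⟨rfl, rfl⟩
  map_mul' x y := by
    ext i j; fin_cases i <;> fin_cases j <;>
      simp [Complex.ext_iff, Matrix.mul_apply, Fin.sum_univ_two] <;> constructor <;> ring
  map_add' x y := by
    ext i j; fin_cases i <;> fin_cases j <;> simp [Complex.ext_iff] <;> ring

noncomputable def evMat (z : ℂ) : Hq[X] →+* Matrix (Fin 2) (Fin 2) ℂ :=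
  Polynomial.eval₂RingHom' qMat (Matrix.scalar (Fin 2) z)
    (fun a => (Matrix.scalar_commute z (fun r => mul_comm _ _) (qMat a)).symm)

lemma evMat_C (z : ℂ) (q : Hq) : evMat z (Polynomial.C q) = qMat q := by
  simp [evMat]

lemma evMat_X (z : ℂ) : evMat z Polynomial.X = Matrix.scalar (Fin 2) z := by
  simp [evMat]

lemma evMat_qPoly (z : ℂ) (f : ℝ[X]) :
    evMat z (qPoly f) = Matrix.scalar (Fin 2) (aeval z f) := by
  induction f using Polynomial.induction_on' with
  | add p q hp hq =>
    simp only [qPoly, Polynomial.map_add, map_add] at *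
    rw [hp, hq]
  | monomial n a =>
    rw [← Polynomial.C_mul_X_pow_eq_monomial]
    simp only [qPoly, Polynomial.map_mul, Polynomial.map_pow, Polynomial.map_C, Polynomial.map_X,
      map_mul, map_pow, evMat_C, evMat_X, aeval_C, aeval_X]
    congr 1
    ext i j; fin_cases i <;> fin_cases j <;> simp [qMat, Complex.ext_iff]

noncomputable def ofComp (a b c d : ℝ[X]) : Hq[X] :=
  qPoly a + qPoly b * Polynomial.C (mkQ 0 1 0 0) + qPoly c * Polynomial.C (mkQ 0 0 1 0)
    + qPoly d * Polynomial.C (mkQ 0 0 0 1)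

lemma coeff_ofComp (a b c d : ℝ[X]) (n : ℕ) :
    (ofComp a b c d).coeff n = mkQ (a.coeff n) (b.coeff n) (c.coeff n) (d.coeff n) := by
  simp only [ofComp, qPoly, coeff_add, coeff_mul_C, coeff_map]
  ext <;> simp

lemma exists_ofComp (P : Hq[X]) : ∃ a b c d, P = ofComp a b c d := by
  induction P using Polynomial.induction_on' with
  | add p q hp hq =>
    obtain ⟨a, b, c, d, rfl⟩ := hp
    obtain ⟨a', b', c', d', rfl⟩ := hq
    refine ⟨a + a', b + b', c + c', d + d', ?_⟩
    simp only [ofComp, qPoly, Polynomial.map_add, add_mul]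
    abel
  | monomial n q =>
    refine ⟨monomial n q.re, monomial n q.imI, monomial n q.imJ, monomial n q.imK, ?_⟩
    ext m : 1
    rw [coeff_ofComp]
    simp only [coeff_monomial]
    split_ifs <;> rfl

lemma cstar_ofComp (a b c d : ℝ[X]) : cstar (ofComp a b c d) = ofComp a (-b) (-c) (-d) := by
  ext m : 1
  have : ∀ P : Hq[X], (cstar P).coeff m = star (P.coeff m) := by
    intro P
    simp only [cstar, Polynomial.sum, finsetSum_coeff, coeff_C_mul, coeff_X_pow]
    simp
    intro h; rw [h]; simp
  rw [this, coeff_ofComp, coeff_ofComp]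
  ext <;> simp

lemma evMat_ofComp (z : ℂ) (a b c d : ℝ[X]) : evMat z (ofComp a b c d) =
    !![aeval z a + aeval z b * Complex.I, aeval z c + aeval z d * Complex.I;
      -aeval z c + aeval z d * Complex.I, aeval z a - aeval z b * Complex.I] := by
  simp only [ofComp, map_add, map_mul, evMat_qPoly, evMat_C]
  have h1 : (⟨0, 1⟩ : ℂ) = Complex.I := rfl
  have h2 : (⟨0, -1⟩ : ℂ) = -Complex.I := by simp [Complex.ext_iff]
  have h3 : (⟨-1, 0⟩ : ℂ) = -1 := by simp [Complex.ext_iff]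
  have h4 : (⟨1, 0⟩ : ℂ) = 1 := rfl
  have h5 : (⟨0, 0⟩ : ℂ) = 0 := rfl
  ext i j; fin_cases i <;> fin_cases j <;>
    simp [qMat, h1, h2, h3, h4, h5, Matrix.mul_apply, Fin.sum_univ_two] <;> ring

lemma dvd_of_root {N : ℝ[X]} (hN : Irreducible N) {z : ℂ} (hz : aeval z N = 0) {f : ℝ[X]}
    (hf : aeval z f = 0) : N ∣ f := by
  by_contra h
  obtain ⟨u, v, huv⟩ := (hN.coprime_iff_not_dvd).2 h
  have := congrArg (aeval z) huv
  simp [hz, hf] at this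

lemma rdvd_iff {N : ℝ[X]} (hN : Irreducible N) {z : ℂ} (hz : aeval z N = 0) (P : Hq[X]) :
    RDvdQ N P ↔ evMat z P = 0 := by
  constructor
  · rintro ⟨D, rfl⟩
    rw [map_mul, evMat_qPoly, hz]; simp
  · intro h
    obtain ⟨a, b, c, d, rfl⟩ := exists_ofComp P
    rw [evMat_ofComp] at h
    have e1 := congrFun (congrFun h 0) 0
    have e2 := congrFun (congrFun h 0) 1
    have e3 := congrFun (congrFun h 1) 0
    have e4 := congrFun (congrFun h 1) 1
    simp at e1 e2 e3 e4
    have ha : aeval z a = 0 := by linear_combination (e1 + e4) / 2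
    have hc : aeval z c = 0 := by linear_combination (e2 - e3) / 2
    have hb : aeval z b = 0 := by simpa [ha] using e1
    have hd : aeval z d = 0 := by simpa [hc] using e2
    obtain ⟨a', rfl⟩ := dvd_of_root hN hz ha
    obtain ⟨b', rfl⟩ := dvd_of_root hN hz hb
    obtain ⟨c', rfl⟩ := dvd_of_root hN hz hc
    obtain ⟨d', rfl⟩ := dvd_of_root hN hz hd
    refine ⟨ofComp a' b' c' d', ?_⟩
    simp only [ofComp, qPoly, Polynomial.map_mul, mul_add, mul_assoc]

lemma mat_abc (A B C : Matrix (Fin 2) (Fin 2) ℂ) (hB : B.det = 0) (h : A * B * C = 0) :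
    A * B = 0 ∨ B * C = 0 := by
  obtain ⟨u, v, rfl⟩ : ∃ u v : Fin 2 → ℂ, B = Matrix.vecMulVec u v := by
    rw [Matrix.det_fin_two] at hB
    by_cases h0 : B 0 0 = 0
    · by_cases h1 : B 0 1 = 0
      · refine ⟨![0, 1], ![B 1 0, B 1 1], ?_⟩
        ext i j; fin_cases i <;> fin_cases j <;> simp [Matrix.vecMulVec_apply, h0, h1]
      · have h2 : B 1 0 = 0 := by simpa [h0, h1] using hB
        refine ⟨![B 0 1, B 1 1], ![0, 1], ?_⟩
        ext i j; fin_cases i <;> fin_cases j <;> simp [Matrix.vecMulVec_apply, h0, h2]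
    · refine ⟨![1, B 1 0 / B 0 0], ![B 0 0, B 0 1], ?_⟩
      ext i j; fin_cases i <;> fin_cases j <;> simp [Matrix.vecMulVec_apply, h0]
      field_simp
      linear_combination hB
  rw [Matrix.mul_vecMulVec, Matrix.vecMulVec_mul, Matrix.vecMulVec_eq_zero] at h
  rw [Matrix.mul_vecMulVec, Matrix.vecMulVec_mul]
  rcases h with h | h <;> simp [h]

/-- ABC-Lemma. -/
theorem abc_lemma (N : ℝ[X]) (hN2 : N.natDegree = 2) (hNirr : Irreducible N)
    (A B Cq : Hq[X]) (h1 : RDvdQ N (A * B * Cq)) (h2 : RDvdQ N (B * cstar B)) :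
    RDvdQ N (A * B) ∨ RDvdQ N (B * Cq) := by
  obtain ⟨z, hz⟩ := IsAlgClosed.exists_aeval_eq_zero ℂ N
    (by intro h; have h3 : N.natDegree = 0 := Polynomial.natDegree_eq_of_degree_eq_some h; omega)
  rw [rdvd_iff hNirr hz] at *
  rw [rdvd_iff hNirr hz]
  simp only [map_mul] at *
  refine mat_abc _ _ _ ?_ h1
  obtain ⟨a, b, c, d, rfl⟩ := exists_ofComp B
  rw [cstar_ofComp, evMat_ofComp, evMat_ofComp] at h2
  have e := congrFun (congrFun h2 0) 0
  simp [Matrix.mul_apply, Fin.sum_univ_two] at e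
  rw [evMat_ofComp, Matrix.det_fin_two]
  simp
  linear_combination e
end

section
/- (AB-Lemma) Let F ∈ ℝ[t] be monic and let A, B ∈ ℍ[t] be nonzero quaternion polynomials such that F divides A·B in ℍ[t], and the only monic real polynomial dividing both F and A is 1, and likewise for F and B (mrpf(F, A) = mrpf(F, B) = 1). Then there exists a monic quaternion polynomial R ∈ ℍ[t] such that A = A₁·R and B = R*·B₁ for some A₁, B₁ ∈ ℍ[t] and F = R·R*. -/
open Polynomial DualNumber TrivSqZeroExt

theorem cstar_coeff (A : Hq[X]) (n : ℕ) : (cstar A).coeff n = star (A.coeff n) := by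
  unfold cstar
  rw [Polynomial.sum_def, Polynomial.finsetSum_coeff]
  simp only [Polynomial.coeff_C_mul, Polynomial.coeff_X_pow, mul_ite, mul_one, mul_zero]
  rw [Finset.sum_ite_eq]
  split_ifs with h
  · rfl
  · rw [Polynomial.notMem_support_iff.mp h, star_zero]

theorem cstar_cstar (A : Hq[X]) : cstar (cstar A) = A := by
  ext1 n
  simp only [cstar_coeff, star_star]

theorem cstar_mul (A B : Hq[X]) : cstar (A * B) = cstar B * cstar A := by
  ext1 n
  rw [cstar_coeff, Polynomial.coeff_mul, Polynomial.coeff_mul, star_sum,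
    ← Finset.Nat.sum_antidiagonal_swap]
  refine Finset.sum_congr rfl fun x _ => ?_
  simp only [cstar_coeff, star_mul, Prod.fst_swap, Prod.snd_swap]

theorem cstar_qPoly (f : ℝ[X]) : cstar (qPoly f) = qPoly f := by
  ext1 n
  rw [cstar_coeff, qPoly, Polynomial.coeff_map]
  exact Quaternion.star_coe _

theorem qPoly_mul (f g : ℝ[X]) : qPoly (f * g) = qPoly f * qPoly g := by
  simp [qPoly]

theorem qPoly_comm (f : ℝ[X]) (A : Hq[X]) : qPoly f * A = A * qPoly f := by
  ext1 n
  rw [Polynomial.coeff_mul, Polynomial.coeff_mul, ← Finset.Nat.sum_antidiagonal_swap]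
  refine Finset.sum_congr rfl fun x _ => ?_
  simp only [qPoly, Polynomial.coeff_map, Prod.fst_swap, Prod.snd_swap]
  exact Algebra.commutes _ _

theorem qPoly_inj : Function.Injective (algebraMap ℝ Hq) :=
  (algebraMap ℝ Hq).injective

theorem qPoly_ne {f : ℝ[X]} (hf : f.Monic) : qPoly f ≠ 0 :=
  (hf.map (algebraMap ℝ Hq)).ne_zero

theorem norm_real (S : Hq[X]) : ∃ N : ℝ[X], S * cstar S = qPoly N := by
  have h : cstar (S * cstar S) = S * cstar S := by rw [cstar_mul, cstar_cstar]
  have : S * cstar S ∈ Polynomial.lifts (algebraMap ℝ Hq) := by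
    rw [Polynomial.lifts_iff_coeff_lifts]
    intro n
    have h2 := congrArg (fun P => Polynomial.coeff P n) h
    simp only [cstar_coeff] at h2
    exact ⟨_, (Quaternion.star_eq_self.mp h2).symm⟩
  obtain ⟨N, hN⟩ := (Polynomial.mem_lifts _).mp this
  exact ⟨N, hN.symm⟩

/-- right ideal generated by `B` and the central monic `F`. -/
theorem exists_gcd (F B : Hq[X]) (hF : F.Monic) :
    ∃ S U V B₁ Q : Hq[X], S.Monic ∧ S = B * U + F * V ∧ B = S * B₁ ∧ F = S * Q := by
  classical
  have hex : ∃ n : ℕ, ∃ S U V : Hq[X], S.Monic ∧ S = B * U + F * V ∧ S.natDegree = n :=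
    ⟨_, F, 0, 1, hF, by simp, rfl⟩
  obtain ⟨S, U, V, hS, hSe, hn⟩ := Nat.find_spec hex
  have key : ∀ P U' V' : Hq[X], P = B * U' + F * V' → ∃ Q, P = S * Q := by
    intro P U' V' hP
    refine ⟨P /ₘ S, ?_⟩
    have hdiv := Polynomial.modByMonic_add_div P S
    by_cases h0 : P %ₘ S = 0
    · rw [h0, zero_add] at hdiv
      exact hdiv.symm
    exfalso
    have hlc : (P %ₘ S).leadingCoeff ≠ 0 := Polynomial.leadingCoeff_ne_zero.mpr h0
    have hm : (P %ₘ S * C (P %ₘ S).leadingCoeff⁻¹).Monic :=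
      Polynomial.monic_mul_leadingCoeff_inv h0
    have hlt : (P %ₘ S * C (P %ₘ S).leadingCoeff⁻¹).natDegree < Nat.find hex := by
      rw [← hn]
      apply Polynomial.natDegree_lt_natDegree hm.ne_zero
      rw [Polynomial.degree_mul_C (inv_ne_zero hlc)]
      exact Polynomial.degree_modByMonic_lt _ hS
    refine Nat.find_min hex hlt ⟨_, (U' - U * (P /ₘ S)) * C (P %ₘ S).leadingCoeff⁻¹,
      (V' - V * (P /ₘ S)) * C (P %ₘ S).leadingCoeff⁻¹, hm, ?_, rfl⟩
    rw [← mul_assoc, ← mul_assoc, ← add_mul]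
    congr 1
    rw [eq_sub_of_add_eq hdiv]
    generalize P /ₘ S = W
    rw [hSe, hP]
    noncomm_ring
  obtain ⟨B₁, hB₁⟩ := key B 1 0 (by simp)
  obtain ⟨Q, hQ⟩ := key F 0 1 (by simp)
  exact ⟨S, U, V, B₁, Q, hS, hSe, hB₁, hQ⟩

theorem content_arg (f g : ℝ[X]) (hf : f.Monic) (hg : g.Monic) (q r : Hq[X])
    (h : qPoly f * q = qPoly g * r)
    (hq : ∀ f : ℝ[X], f.Monic → RDvdQ f q → f = 1) : g ∣ f := by
  classical
  have hd0 : gcd f g ≠ 0 := fun h0 => hf.ne_zero ((gcd_eq_zero_iff f g).mp h0).1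
  have hd : (gcd f g).Monic := by
    rw [← normalize_gcd]; exact Polynomial.monic_normalize hd0
  obtain ⟨f', hf'⟩ := gcd_dvd_left f g
  obtain ⟨g', hg'⟩ := gcd_dvd_right f g
  have hgm : g'.Monic := Polynomial.Monic.of_mul_monic_left hd (hg' ▸ hg)
  have hco : IsCoprime f' g' := by
    obtain ⟨a, b, hab⟩ := exists_gcd_eq_mul_add_mul f g
    refine ⟨a, b, mul_left_cancel₀ hd0 ?_⟩
    rw [mul_one]
    calc gcd f g * (a * f' + b * g') = (gcd f g * f') * a + (gcd f g * g') * b := by ring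
      _ = gcd f g := by rw [← hf', ← hg', ← hab]
  have h2 : qPoly f' * q = qPoly g' * r := by
    apply mul_left_cancel₀ (qPoly_ne hd)
    rw [← mul_assoc, ← mul_assoc, ← qPoly_mul, ← qPoly_mul, ← hf', ← hg', h]
  obtain ⟨a, b, hab⟩ := hco
  have h1 : g' = 1 := by
    refine hq g' hgm ⟨qPoly a * r + qPoly b * q, ?_⟩
    have : q = qPoly (a * f' + b * g') * q := by simp [hab, qPoly]
    have e : qPoly (a * f' + b * g') = qPoly a * qPoly f' + qPoly b * qPoly g' := by
      simp [qPoly]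
    rw [e, add_mul, mul_assoc, h2, qPoly_comm b] at this
    rw [mul_add, ← mul_assoc, qPoly_comm g' (qPoly a), ← mul_assoc, mul_assoc (qPoly a)]
    exact this
  rw [hg', h1, mul_one]
  exact gcd_dvd_left f g

/-- AB-Lemma. -/
theorem ab_lemma (F : ℝ[X]) (hF : F.Monic) (A B : Hq[X]) (hA : A ≠ 0) (hB : B ≠ 0)
    (hdvd : RDvdQ F (A * B))
    (hFA : ∀ f : ℝ[X], f.Monic → f ∣ F → RDvdQ f A → f = 1)
    (hFB : ∀ f : ℝ[X], f.Monic → f ∣ F → RDvdQ f B → f = 1) :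
    ∃ R A₁ B₁ : Hq[X], R.Monic ∧ A = A₁ * R ∧ B = cstar R * B₁ ∧
      qPoly F = R * cstar R := by
  obtain ⟨S, U, V, B₁, Q, hS, hSe, hB₁, hQ⟩ := exists_gcd (qPoly F) B (hF.map _)
  have hFm : (qPoly F).Monic := hF.map _
  have hQm : Q.Monic := Polynomial.Monic.of_mul_monic_left hS (hQ ▸ hFm)
  have hQS : qPoly F = Q * S := by
    apply mul_left_cancel₀ hS.ne_zero
    rw [← mul_assoc, ← hQ, qPoly_comm]
  obtain ⟨D, hD⟩ := hdvd
  have hAQ : A = (D * U + A * V) * Q := by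
    apply mul_right_cancel₀ hS.ne_zero
    rw [mul_assoc _ Q, ← hQS, ← qPoly_comm, mul_add, ← mul_assoc, ← hD, ← mul_assoc _ A,
      qPoly_comm F A]
    conv_lhs => rw [hSe]
    noncomm_ring
  obtain ⟨N, hN⟩ := norm_real S
  have hN' : cstar S * S = qPoly N := by
    apply mul_left_cancel₀ hS.ne_zero
    rw [← mul_assoc, hN, qPoly_comm]
  have hinjd : ∀ f : ℝ[X], f.Monic → (∃ W, qPoly F = qPoly f * W) → f ∣ F := by
    intro f hf ⟨W, hW⟩
    exact (Polynomial.map_dvd_map _ qPoly_inj hf).mp ⟨W, hW⟩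
  have rQ : ∀ f : ℝ[X], f.Monic → RDvdQ f Q → f = 1 := by
    rintro f hf ⟨W, hW⟩
    refine hFA f hf (hinjd f hf ⟨W * S, by rw [hQS, hW, mul_assoc]⟩)
      ⟨(D * U + A * V) * W, ?_⟩
    rw [← mul_assoc, qPoly_comm, mul_assoc, ← hW]
    exact hAQ
  have rS : ∀ f : ℝ[X], f.Monic → RDvdQ f (cstar S) → f = 1 := by
    rintro f hf ⟨W, hW⟩
    have hS2 : S = qPoly f * cstar W := by
      rw [← cstar_cstar S, hW, cstar_mul, cstar_qPoly, qPoly_comm]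
    refine hFB f hf (hinjd f hf ⟨cstar W * Q, by rw [← mul_assoc, ← hS2, hQ]⟩)
      ⟨cstar W * B₁, ?_⟩
    rw [← mul_assoc, ← hS2]
    exact hB₁
  have hSsm : (cstar S).Monic := by
    apply Polynomial.monic_of_natDegree_le_of_coeff_eq_one S.natDegree
    · rw [Polynomial.natDegree_le_iff_coeff_eq_zero]
      intro n hn
      rw [cstar_coeff, Polynomial.coeff_eq_zero_of_natDegree_lt hn, star_zero]
    · rw [cstar_coeff, hS.coeff_natDegree, star_one]
  have hNm : N.Monic := by
    have : (qPoly N).Monic := hN ▸ hS.mul hSsm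
    exact Polynomial.monic_of_injective qPoly_inj this
  have key : qPoly N * Q = qPoly F * cstar S := by
    rw [← hN', mul_assoc, ← hQ, qPoly_comm]
  have hNF : N = F := Polynomial.eq_of_monic_of_associated hNm hF
    (associated_of_dvd_dvd (content_arg F N hF hNm _ _ key.symm rS)
      (content_arg N F hNm hF _ _ key rQ))
  rw [hNF] at key
  have hQeq : Q = cstar S := mul_left_cancel₀ (qPoly_ne hF) key
  refine ⟨Q, D * U + A * V, B₁, hQm, hAQ, ?_, ?_⟩
  · rw [hQeq, cstar_cstar]; exact hB₁
  · rw [hQeq, cstar_cstar, hN', hNF]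
end

section
/- Let M = f₁f₂ + εD ∈ 𝔻ℍ[t] be a monic translational motion polynomial, where D ∈ ℍ[t] and f₁, f₂ ∈ ℝ[t] are coprime monic real polynomials. Then there exist D₁, D₂ ∈ ℍ[t] such that M₁ := f₁ + εD₁ and M₂ := f₂ + εD₂ are monic translational motion polynomials and M = M₁·M₂. -/
open Polynomial DualNumber TrivSqZeroExt

namespace TS

lemma exists_comp (φ : Hq → ℝ) (h0 : φ 0 = 0) (D : Hq[X]) :
    ∃ a : ℝ[X], ∀ n, a.coeff n = φ (D.coeff n) := by
  refine ⟨∑ n ∈ D.support, monomial n (φ (D.coeff n)), fun n => ?_⟩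
  rw [finsetSum_coeff]
  simp only [coeff_monomial]
  rw [Finset.sum_ite_eq' D.support n]
  split_ifs with h
  · rfl
  · rw [notMem_support_iff.mp h, h0]

lemma coeff_cstar {R : Type*} [Semiring R] [Star R] (h0 : star (0:R) = 0) (A : R[X]) (n : ℕ) :
    (cstar A).coeff n = star (A.coeff n) := by
  unfold cstar
  rw [Polynomial.sum_def, finsetSum_coeff]
  simp only [coeff_C_mul, coeff_X_pow, mul_ite, mul_one, mul_zero]
  rw [Finset.sum_ite_eq A.support n]
  split_ifs with h
  · rfl
  · rw [notMem_support_iff.mp h, h0]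

lemma star_def (x : DHq) : star x = inl (star x.fst) + inr (star x.snd) := rfl

lemma star_fst (x : DHq) : (star x).fst = star x.fst := by simp [star_def]
lemma star_snd (x : DHq) : (star x).snd = star x.snd := by simp [star_def]

lemma mp_coeff (P D : Hq[X]) (n : ℕ) :
    (mp P D).coeff n = inl (P.coeff n) + inr (D.coeff n) := by
  unfold mp dhQ
  rw [coeff_add, coeff_C_mul, coeff_map, coeff_map]
  ext <;> simp

lemma mp_coeff_fst (P D : Hq[X]) (n : ℕ) : ((mp P D).coeff n).fst = P.coeff n := by
  simp [mp_coeff]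
lemma mp_coeff_snd (P D : Hq[X]) (n : ℕ) : ((mp P D).coeff n).snd = D.coeff n := by
  simp [mp_coeff]

lemma mp_ext {P D P' D' : Hq[X]} (h : mp P D = mp P' D') : P = P' ∧ D = D' := by
  constructor
  · ext1 n; rw [← mp_coeff_fst P D, h, mp_coeff_fst]
  · ext1 n; rw [← mp_coeff_snd P D, h, mp_coeff_snd]

lemma star0 : star (0 : DHq) = 0 := by simp [star_def]

lemma cstar_mp (P D : Hq[X]) : cstar (mp P D) = mp (cstar P) (cstar D) := by
  ext1 n
  rw [coeff_cstar star0, mp_coeff, star_def, mp_coeff, coeff_cstar (star_zero _),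
    coeff_cstar (star_zero _)]
  simp

lemma eps_comm (A : DHq[X]) : A * Polynomial.C ε = Polynomial.C ε * A := by
  ext1 n
  rw [coeff_mul_C, coeff_C_mul]
  ext <;> simp

lemma mp_mul (P D P' D' : Hq[X]) :
    mp P D * mp P' D' = mp (P * P') (P * D' + D * P') := by
  have he : (Polynomial.C ε : DHq[X]) * Polynomial.C ε = 0 := by
    rw [← Polynomial.C_mul, DualNumber.eps_mul_eps, Polynomial.C_0]
  have h1 : ∀ A B : Hq[X], dhQ (A * B) = dhQ A * dhQ B := fun A B => Polynomial.map_mul _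
  have h2 : ∀ A B : Hq[X], dhQ (A + B) = dhQ A + dhQ B := fun A B => Polynomial.map_add _
  unfold mp
  rw [h1, h2, h1, h1, add_mul, mul_add, mul_add, mul_add]
  have e1 : dhQ P * (Polynomial.C ε * dhQ D') = Polynomial.C ε * (dhQ P * dhQ D') := by
    rw [← mul_assoc, eps_comm, mul_assoc]
  have e2 : Polynomial.C ε * dhQ D * (Polynomial.C ε * dhQ D') = 0 := by
    rw [mul_assoc, ← mul_assoc (dhQ D), eps_comm, mul_assoc, ← mul_assoc, he, zero_mul]
  rw [e1, e2, mul_assoc]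
  abel

lemma dPoly_eq (f : ℝ[X]) : dPoly f = mp (qPoly f) 0 := by
  simp [dPoly, mp, dhQ]

lemma cstar_qPoly (f : ℝ[X]) : cstar (qPoly f) = qPoly f := by
  ext1 n
  rw [coeff_cstar (star_zero _), qPoly, coeff_map]
  simp [Quaternion.algebraMap_def]

lemma qPoly_comm (f : ℝ[X]) (D : Hq[X]) : D * qPoly f = qPoly f * D := by
  unfold qPoly
  induction f using Polynomial.induction_on' with
  | add p q hp hq => rw [Polynomial.map_add, mul_add, add_mul, hp, hq]
  | monomial n a =>
    rw [map_monomial, ← C_mul_X_pow_eq_monomial, ← mul_assoc, mul_assoc _ (X ^ n), X_pow_mul,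
      ← mul_assoc]
    congr 1
    ext1 m
    rw [coeff_mul_C, coeff_C_mul, Algebra.commutes]

lemma motion_iff (f : ℝ[X]) (hf : f.Monic) (D : Hq[X]) :
    IsMotion (mp (qPoly f) D) ↔ ∀ n, (D.coeff n).re = 0 := by
  have key : mp (qPoly f) D * cstar (mp (qPoly f) D)
      = mp (qPoly (f * f)) (qPoly f * (cstar D + D)) := by
    rw [cstar_mp, cstar_qPoly, mp_mul, qPoly_comm f D, mul_add]
    congr 1
    simp [qPoly]
  have hre : ∀ q : Hq, star q + q = 0 ↔ q.re = 0 := by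
    intro q
    rw [add_comm, Quaternion.self_add_star', ← Quaternion.coe_zero, Quaternion.coe_inj]
    simp
  have hq : (qPoly f).Monic := hf.map _
  constructor
  · rintro ⟨g, -, hg⟩ n
    rw [key, dPoly_eq] at hg
    have h := (mp_ext hg).2
    have h' : cstar D + D = 0 := (mul_eq_zero.mp h).resolve_left hq.ne_zero
    rw [← hre, ← coeff_cstar (star_zero _), ← coeff_add, h', coeff_zero]
  · intro h
    refine ⟨f * f, (hf.mul hf).ne_zero, ?_⟩
    rw [key, dPoly_eq]
    congr 1
    have : cstar D + D = 0 := by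
      ext1 n
      rw [coeff_add, coeff_cstar (star_zero _), (hre _).2 (h n), coeff_zero]
    rw [this, mul_zero]

lemma monic_mp (f : ℝ[X]) (hf : f.Monic) (D : Hq[X])
    (h : ∀ n, f.natDegree ≤ n → D.coeff n = 0) : (mp (qPoly f) D).Monic := by
  refine monic_of_natDegree_le_of_coeff_eq_one f.natDegree ?_ ?_
  · rw [natDegree_le_iff_coeff_eq_zero]
    intro n hn
    rw [mp_coeff, h n hn.le, qPoly, coeff_map, coeff_eq_zero_of_natDegree_lt hn]
    simp
  · rw [mp_coeff, h _ le_rfl, qPoly, coeff_map, hf.coeff_natDegree]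
    simp

lemma coeff_of_monic (f : ℝ[X]) (D : Hq[X])
    (h : (mp (qPoly f) D).Monic) : ∀ n, f.natDegree ≤ n → D.coeff n = 0 := by
  intro n hn
  set N := (mp (qPoly f) D).natDegree with hN
  have h1 : (mp (qPoly f) D).coeff N = 1 := h.coeff_natDegree
  have hs := congrArg TrivSqZeroExt.snd h1
  have hff := congrArg TrivSqZeroExt.fst h1
  rw [mp_coeff_snd] at hs
  rw [mp_coeff_fst] at hff
  have hNf : N ≤ f.natDegree := by
    by_contra hc
    rw [qPoly, coeff_map, coeff_eq_zero_of_natDegree_lt (not_le.mp hc)] at hff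
    simp at hff
  rcases (hNf.trans hn).eq_or_lt with e | l
  · rw [← e, hs]; simp
  · rw [← mp_coeff_snd (qPoly f) D, coeff_eq_zero_of_natDegree_lt l]; simp

lemma degree_mul_lt_mul_left {f r g : ℝ[X]} (hf : f.Monic) (h : r.degree < g.degree) :
    (f * r).degree < (f * g).degree := by
  rw [degree_mul, degree_mul, degree_eq_natDegree hf.ne_zero]
  exact WithBot.add_lt_add_left (WithBot.natCast_ne_bot _) h

lemma lt_of_degree_mul {f r g : ℝ[X]} (hf : f.Monic) (h : (f * r).degree < (f * g).degree) :
    r.degree < g.degree := by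
  rw [degree_mul, degree_mul] at h
  exact lt_of_add_lt_add_left h

lemma real_split (f₁ f₂ : ℝ[X]) (hf₁ : f₁.Monic) (hf₂ : f₂.Monic) (hcop : IsCoprime f₁ f₂)
    (a : ℝ[X]) (ha : ∀ n, (f₁ * f₂).natDegree ≤ n → a.coeff n = 0) :
    ∃ a₁ a₂ : ℝ[X], (∀ n, f₁.natDegree ≤ n → a₁.coeff n = 0) ∧
      (∀ n, f₂.natDegree ≤ n → a₂.coeff n = 0) ∧ a = f₁ * a₂ + f₂ * a₁ := by
  obtain ⟨u, v, huv⟩ := hcop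
  have hd : ∀ f g : ℝ[X], f.Monic → ((∀ n, f.natDegree ≤ n → g.coeff n = 0) ↔
      g.degree < f.degree) := by
    intro f g hf
    rw [degree_eq_natDegree hf.ne_zero, degree_lt_iff_coeff_zero]
  have hdec := modByMonic_add_div (v * a) f₁
  have heq : a = f₁ * (u * a + f₂ * ((v * a) /ₘ f₁)) + f₂ * ((v * a) %ₘ f₁) := by
    linear_combination (-a) * huv - f₂ * hdec
  have h1 := degree_modByMonic_lt (v * a) hf₁
  refine ⟨(v * a) %ₘ f₁, u * a + f₂ * ((v * a) /ₘ f₁), ?_, ?_, heq⟩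
  · rw [hd _ _ hf₁]; exact h1
  · rw [hd _ _ hf₂]
    rw [hd _ _ (hf₁.mul hf₂)] at ha
    set r := (v * a) %ₘ f₁
    set s := u * a + f₂ * ((v * a) /ₘ f₁)
    have h2 : (f₁ * s).degree < (f₁ * f₂).degree := by
      have : f₁ * s = a - f₂ * r := by rw [heq]; ring
      rw [this]
      refine (degree_sub_le _ _).trans_lt (max_lt ha ?_)
      rw [mul_comm f₁]
      exact degree_mul_lt_mul_left hf₂ h1
    exact lt_of_degree_mul hf₁ h2

def qI : Hq := ⟨0, 1, 0, 0⟩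
def qJ : Hq := ⟨0, 0, 1, 0⟩
def qK : Hq := ⟨0, 0, 0, 1⟩

noncomputable def build (a b c : ℝ[X]) : Hq[X] :=
  qPoly a * Polynomial.C qI + qPoly b * Polynomial.C qJ + qPoly c * Polynomial.C qK

lemma build_coeff (a b c : ℝ[X]) (n : ℕ) :
    (build a b c).coeff n = (⟨0, a.coeff n, b.coeff n, c.coeff n⟩ : Hq) := by
  unfold build qPoly
  simp only [coeff_add, coeff_mul_C, coeff_map, Quaternion.algebraMap_def]
  ext <;> simp <;> simp [qI, qJ, qK]

lemma build_lin (f a b c : ℝ[X]) : qPoly f * build a b c = build (f * a) (f * b) (f * c) := by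
  unfold build qPoly
  simp only [mul_add, Polynomial.map_mul, mul_assoc]

lemma build_add (a b c a' b' c' : ℝ[X]) :
    build a b c + build a' b' c' = build (a + a') (b + b') (c + c') := by
  unfold build qPoly
  simp only [add_mul, Polynomial.map_add]
  abel

end TS

/-- Factorization of translational motion polynomials along a coprime splitting of the
primal part. -/
theorem translational_splitting
    (f₁ f₂ : ℝ[X]) (hf₁ : f₁.Monic) (hf₂ : f₂.Monic) (hcop : IsCoprime f₁ f₂)
    (D : Hq[X]) (M : DHq[X]) (hM : M = mp (qPoly (f₁ * f₂)) D)
    (hmonic : M.Monic) (hmotion : IsMotion M) :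
    ∃ D₁ D₂ : Hq[X],
      (mp (qPoly f₁) D₁).Monic ∧ IsMotion (mp (qPoly f₁) D₁) ∧
      (mp (qPoly f₂) D₂).Monic ∧ IsMotion (mp (qPoly f₂) D₂) ∧
      M = mp (qPoly f₁) D₁ * mp (qPoly f₂) D₂ := by
  subst hM
  have hD := TS.coeff_of_monic _ _ hmonic
  have hre := (TS.motion_iff _ (hf₁.mul hf₂) D).1 hmotion
  obtain ⟨a, ha⟩ := TS.exists_comp (fun q => q.imI) rfl D
  obtain ⟨b, hb⟩ := TS.exists_comp (fun q => q.imJ) rfl D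
  obtain ⟨c, hc⟩ := TS.exists_comp (fun q => q.imK) rfl D
  have hDb : D = TS.build a b c := by
    ext1 n
    rw [TS.build_coeff, ha, hb, hc]
    ext <;> simp [hre]
  obtain ⟨a₁, a₂, ha1, ha2, hae⟩ := TS.real_split f₁ f₂ hf₁ hf₂ hcop a
    (fun n hn => by rw [ha, hD n hn]; rfl)
  obtain ⟨b₁, b₂, hb1, hb2, hbe⟩ := TS.real_split f₁ f₂ hf₁ hf₂ hcop b
    (fun n hn => by rw [hb, hD n hn]; rfl)
  obtain ⟨c₁, c₂, hc1, hc2, hce⟩ := TS.real_split f₁ f₂ hf₁ hf₂ hcop c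
    (fun n hn => by rw [hc, hD n hn]; rfl)
  refine ⟨TS.build a₁ b₁ c₁, TS.build a₂ b₂ c₂, ?_, ?_, ?_, ?_, ?_⟩
  · refine TS.monic_mp _ hf₁ _ fun n hn => ?_
    rw [TS.build_coeff, ha1 n hn, hb1 n hn, hc1 n hn]; rfl
  · rw [TS.motion_iff _ hf₁]
    intro n; rw [TS.build_coeff]
  · refine TS.monic_mp _ hf₂ _ fun n hn => ?_
    rw [TS.build_coeff, ha2 n hn, hb2 n hn, hc2 n hn]; rfl
  · rw [TS.motion_iff _ hf₂]
    intro n; rw [TS.build_coeff]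
  · rw [TS.mp_mul, TS.qPoly_comm f₂ (TS.build _ _ _), TS.build_lin, TS.build_lin, TS.build_add, ← hae, ← hbe, ← hce,
      ← hDb]
    congr 1
    simp [qPoly]
end
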